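/- arXiv:1305.1664 — 3 statements merged into one kernel-verified Lean document; each statement's English description precedes it below -/
import Mathlib

section
/- Let G be a nontrivial finite group acting freely by diffeomorphisms on the sphere Sⁿ, let N = Sⁿ/G be the orbit space, and let m, n ≥ 2. If f₁, f₂ : Sᵐ → N are continuous maps that are NOT homotopic to each other, then MCC(f₁,f₂) = #G: there exist continuous f₁' homotopic to f₁ and f₂' homotopic to f₂ whose coincidence set has exactly #G path components, and no homotopic pair has a coincidence set with fewer path components. -/
open scoped Manifold

/-- The unit sphere `Sᵏ ⊆ ℝ^{k+1}`. -/
abbrev Sph (k : ℕ) : Type :=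
  Metric.sphere (0 : EuclideanSpace ℝ (Fin (k + 1))) 1

/-! ## Part A: piecewise affine maps, general position -/
namespace MCC
open Set Metric

section Avoid
variable {E : Type*} [NormedAddCommGroup E] [NormedSpace ℝ E] [FiniteDimensional ℝ E]

/-- A nonempty open set is not covered by finitely many proper affine subspaces. -/
lemma exists_avoid {β : Type*} [Finite β] (Z : β → AffineSubspace ℝ E) (hZ : ∀ b, Z b ≠ ⊤)
    (U : Set E) (hU : IsOpen U) (hne : U.Nonempty) : ∃ o ∈ U, ∀ b, o ∉ Z b := by
  by_contra! hcon
  let _ : MeasurableSpace E := borel E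
  have : BorelSpace E := ⟨rfl⟩
  have h0 : (MeasureTheory.Measure.addHaar : MeasureTheory.Measure E) (⋃ b, (Z b : Set E)) = 0 :=
    MeasureTheory.measure_iUnion_null fun b =>
      MeasureTheory.Measure.addHaar_affineSubspace _ _ (hZ b)
  have hsub : U ⊆ ⋃ b, (Z b : Set E) := fun o ho => by
    obtain ⟨b, hb⟩ := hcon o ho
    exact mem_iUnion.2 ⟨b, hb⟩
  exact (hU.measure_pos MeasureTheory.Measure.addHaar hne).ne' (MeasureTheory.measure_mono_null hsub h0)

/-- General position for a point relative to codimension two subspaces and finitely many points. -/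
lemma exists_center {β γ : Type*} [Finite β] [Finite γ] (Z : β → AffineSubspace ℝ E)
    (hZ : ∀ b, Module.finrank ℝ (Z b).direction + 2 ≤ Module.finrank ℝ E)
    (p : γ → E) (U : Set E) (hU : IsOpen U) (hne : U.Nonempty) :
    ∃ o ∈ U, (∀ b, o ∉ Z b) ∧ ∀ b c, ∀ t : ℝ, o + t • (p c - o) ∈ Z b → t = 1 ∧ p c ∈ Z b := by
  classical
  let W : Option γ × β → AffineSubspace ℝ E := fun x => 
    match x.1 with
    | none => Z x.2
    | some c => if p c ∈ Z x.2 then Z x.2 else affineSpan ℝ (insert (p c) (Z x.2 : Set E))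
  have hZt : ∀ b, Z b ≠ ⊤ := fun b h => by
    have := hZ b
    rw [h, AffineSubspace.direction_top, finrank_top] at this
    omega
  have hW : ∀ x, W x ≠ ⊤ := by
    rintro ⟨_ | c, b⟩
    · exact hZt b
    · simp only [W]
      split_ifs with h
      · exact hZt b
      · intro htop
        have hd : Module.finrank ℝ (affineSpan ℝ (insert (p c) (Z b : Set E))).direction
            ≤ Module.finrank ℝ (Z b).direction + 1 := by
          rw [direction_affineSpan]
          have := finrank_vectorSpan_insert_le (Z b) (p c)
          simpa using this
        rw [htop, AffineSubspace.direction_top, finrank_top] at hd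
        have := hZ b
        omega
  obtain ⟨o, hoU, ho⟩ := exists_avoid W hW U hU hne
  have hoZ : ∀ b, o ∉ Z b := fun b => ho (none, b)
  refine ⟨o, hoU, hoZ, fun b c t ht => ?_⟩
  have hc := ho (some c, b)
  simp only [W] at hc
  have ht0 : t ≠ 0 := by
    rintro rfl
    apply hoZ b
    simpa using ht
  split_ifs at hc with h
  · refine ⟨?_, h⟩
    by_contra ht1
    apply hc
    -- o = p + (1/(1-t)) (q - p)
    have h1 : (1 - t) ≠ 0 := sub_ne_zero.2 (Ne.symm ht1)
    have := AffineMap.lineMap_mem (1 - t)⁻¹ h ht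
    convert this using 1
    rw [AffineMap.lineMap_apply]
    simp only [vsub_eq_sub, vadd_eq_add]
    have : o + t • (p c - o) - p c = (1 - t) • (o - p c) := by module
    rw [this, smul_smul, inv_mul_cancel₀ h1]; simp
  · exfalso
    apply hc
    have h1 : p c ∈ affineSpan ℝ (insert (p c) (Z b : Set E)) :=
      subset_affineSpan ℝ _ (mem_insert _ _)
    have h2 : o + t • (p c - o) ∈ affineSpan ℝ (insert (p c) (Z b : Set E)) :=
      subset_affineSpan ℝ _ (mem_insert_of_mem _ ht)
    by_cases ht1 : t = 1
    · subst ht1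
      simp at ht
      exact absurd ht h
    have h3 : (1 - t) ≠ 0 := sub_ne_zero.2 (Ne.symm ht1)
    have := AffineMap.lineMap_mem (1 - t)⁻¹ h1 h2
    convert this using 1
    rw [AffineMap.lineMap_apply]
    simp only [vsub_eq_sub, vadd_eq_add]
    have : o + t • (p c - o) - p c = (1 - t) • (o - p c) := by module
    rw [this, smul_smul, inv_mul_cancel₀ h3]; simp

end Avoid

section Pieces
variable {E F : Type*} [NormedAddCommGroup E] [NormedSpace ℝ E]
  [NormedAddCommGroup F] [NormedSpace ℝ F]

/-- Piecewise affine functions with finitely many convex pieces. -/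
def PA (f : E → F) : Prop :=
  ∃ (Λ : Type) (_ : Finite Λ) (P : Λ → Set E) (A : Λ → E →ᵃ[ℝ] F),
    (∀ l, Convex ℝ (P l)) ∧ (∀ x, ∃ l, x ∈ P l) ∧ ∀ l, ∀ x ∈ P l, f x = A l x

lemma PA.of_affine (A : E →ᵃ[ℝ] F) : PA (A : E → F) :=
  ⟨Unit, inferInstance, fun _ => univ, fun _ => A, fun _ => convex_univ, fun _ => ⟨(), mem_univ _⟩,
    fun _ _ _ => rfl⟩

lemma PA.add {f g : E → F} (hf : PA f) (hg : PA g) : PA (f + g) := by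
  obtain ⟨Λ, _, P, A, hP, hc, hA⟩ := hf
  obtain ⟨Λ', _, P', A', hP', hc', hA'⟩ := hg
  refine ⟨Λ × Λ', inferInstance, fun l => P l.1 ∩ P' l.2, fun l => A l.1 + A' l.2,
    fun l => (hP _).inter (hP' _), fun x => ?_, fun l x hx => ?_⟩
  · obtain ⟨l, hl⟩ := hc x
    obtain ⟨l', hl'⟩ := hc' x
    exact ⟨(l, l'), hl, hl'⟩
  · simp [hA _ _ hx.1, hA' _ _ hx.2]

lemma PA.sum {ι : Type*} (s : Finset ι) (f : ι → E → F) (hf : ∀ i ∈ s, PA (f i)) :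
    PA (∑ i ∈ s, f i) := by
  classical
  induction s using Finset.induction_on with
  | empty =>
    simpa using PA.of_affine (0 : E →ᵃ[ℝ] F)
  | insert a s ha ih =>
    rw [Finset.sum_insert ha]
    exact (hf a (by simp)).add (ih fun i hi => hf i (by simp [hi]))

lemma PA.smul_const {f : E → ℝ} (hf : PA f) (v : F) : PA (fun x => f x • v) := by
  obtain ⟨Λ, _, P, A, hP, hc, hA⟩ := hf
  refine ⟨Λ, inferInstance, P,
    fun l => ((LinearMap.id : ℝ →ₗ[ℝ] ℝ).smulRight v).toAffineMap.comp (A l), hP, hc,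
    fun l x hx => ?_⟩
  simp [hA _ _ hx]

lemma convex_affine_le (A B : E →ᵃ[ℝ] ℝ) : Convex ℝ {x | A x ≤ B x} := by
  have : {x | A x ≤ B x} = (A - B) ⁻¹' (Iic 0) := by
    ext x; simp
  rw [this]
  exact (convex_Iic 0).affine_preimage _

lemma PA.sup {f g : E → ℝ} (hf : PA f) (hg : PA g) : PA (f ⊔ g) := by
  obtain ⟨Λ, _, P, A, hP, hc, hA⟩ := hf
  obtain ⟨Λ', _, P', A', hP', hc', hA'⟩ := hg
  refine ⟨(Λ × Λ') × Bool, inferInstance,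
    fun l => (P l.1.1 ∩ P' l.1.2) ∩
      (if l.2 then {x | A l.1.1 x ≤ A' l.1.2 x} else {x | A' l.1.2 x ≤ A l.1.1 x}),
    fun l => if l.2 then A' l.1.2 else A l.1.1,
    fun l => ((hP _).inter (hP' _)).inter ?_, fun x => ?_, fun l x hx => ?_⟩
  · split_ifs <;> exact convex_affine_le _ _
  · obtain ⟨l, hl⟩ := hc x
    obtain ⟨l', hl'⟩ := hc' x
    rcases le_total (A l x) (A' l' x) with h | h
    · exact ⟨((l, l'), true), ⟨hl, hl'⟩, by simpa using h⟩
    · exact ⟨((l, l'), false), ⟨hl, hl'⟩, by simpa using h⟩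
  · obtain ⟨⟨h1, h2⟩, h3⟩ := hx
    rcases l with ⟨⟨l, l'⟩, _ | _⟩
    · simp at h1 h2 h3
      simp [hA _ _ h1, hA' _ _ h2, h3]
    · simp at h1 h2 h3
      simp [hA _ _ h1, hA' _ _ h2, h3]

lemma PA.neg {f : E → ℝ} (hf : PA f) : PA (-f) := by
  have := hf.smul_const (-1 : ℝ)
  convert this using 1
  ext x; simp

lemma PA.inf {f g : E → ℝ} (hf : PA f) (hg : PA g) : PA (f ⊓ g) := by
  have := (hf.neg.sup hg.neg).neg
  convert this using 1
  ext x
  simp [max_neg_neg]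

end Pieces

section Approx
variable {E : Type*} [NormedAddCommGroup E] [InnerProductSpace ℝ E] [FiniteDimensional ℝ E]

lemma PA.approx_real (D : Set E) (hD : IsCompact D) (φ : E → ℝ) (hφ : Continuous φ) (ε : ℝ)
    (hε : 0 < ε) : ∃ g : E → ℝ, Continuous g ∧ PA g ∧ ∀ x ∈ D, |g x - φ x| < ε := by
  have : CompactSpace D := isCompact_iff_compactSpace.1 hD
  let L : Set C(D, ℝ) := {f | ∃ g : E → ℝ, Continuous g ∧ PA g ∧ ∀ x : D, f x = g x}
  have hL : closure L = ⊤ := by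
    apply ContinuousMap.sublattice_closure_eq_top
    · exact ⟨0, 0, continuous_zero, by simpa using PA.of_affine (0 : E →ᵃ[ℝ] ℝ), fun x => by simp⟩
    · rintro f ⟨g, hg, hPg, hfg⟩ f' ⟨g', hg', hPg', hfg'⟩
      exact ⟨g ⊓ g', hg.inf hg', hPg.inf hPg', fun x => by simp [hfg, hfg']⟩
    · rintro f ⟨g, hg, hPg, hfg⟩ f' ⟨g', hg', hPg', hfg'⟩
      exact ⟨g ⊔ g', hg.sup hg', hPg.sup hPg', fun x => by simp [hfg, hfg']⟩
    · intro v x y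
      let u : E := (x : E) - y
      let A : E →ᵃ[ℝ] ℝ := ((v x - v y) / ‖u‖ ^ 2) • ((innerₛₗ ℝ u).toAffineMap - AffineMap.const ℝ E (inner ℝ u (y : E)))
        + AffineMap.const ℝ E (v y)
      have hAc : Continuous A := A.continuous_of_finiteDimensional
      refine ⟨⟨fun z => A z, hAc.comp continuous_subtype_val⟩, ⟨A, hAc, PA.of_affine A, fun _ => rfl⟩, ?_, ?_⟩
      · by_cases hxy : x = y
        · subst hxy; simp [A]
        · have hu : ‖u‖ ≠ 0 := by
            rw [norm_ne_zero_iff]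
            exact sub_ne_zero.2 fun h => hxy (Subtype.ext h)
          have : inner ℝ u (x : E) - inner ℝ u (y : E) = ‖u‖ ^ 2 := by
            rw [← inner_sub_right, real_inner_self_eq_norm_sq]
          simp [A, this]
          field_simp
          ring
      · simp [A]
  have hmem : (⟨fun z : D => φ z, hφ.comp continuous_subtype_val⟩ : C(D, ℝ)) ∈ closure L := by
    rw [hL]; trivial
  obtain ⟨f, ⟨g, hg, hPg, hfg⟩, hd⟩ := Metric.mem_closure_iff.1 hmem ε hε
  refine ⟨g, hg, hPg, fun x hx => ?_⟩
  have := (ContinuousMap.dist_lt_iff hε).1 hd ⟨x, hx⟩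
  rw [hfg, Real.dist_eq, abs_sub_comm] at this
  exact this

lemma PA.approx {k : ℕ} (D : Set E) (hD : IsCompact D) (φ : E → EuclideanSpace ℝ (Fin k))
    (hφ : Continuous φ) (ε : ℝ) (hε : 0 < ε) :
    ∃ g : E → EuclideanSpace ℝ (Fin k), Continuous g ∧ PA g ∧ ∀ x ∈ D, ‖g x - φ x‖ < ε := by
  have hk : (0:ℝ) < k + 1 := by positivity
  have h := fun i : Fin k => PA.approx_real D hD (fun x => φ x i) (by fun_prop) (ε / (k + 1)) (by positivity)
  choose g hg hPg hgd using h
  refine ⟨∑ i, fun x => g i x • EuclideanSpace.single i (1:ℝ), ?_, PA.sum _ _ fun i _ => (hPg i).smul_const _, fun x hx => ?_⟩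
  · have : (∑ i, fun x => g i x • EuclideanSpace.single i (1:ℝ)) = fun x => ∑ i, g i x • EuclideanSpace.single i (1:ℝ) := by
      ext1 x; simp
    rw [this]
    exact continuous_finsetSum _ fun i _ => (hg i).smul continuous_const
  · have h1 : (∑ i, fun x => g i x • EuclideanSpace.single i (1:ℝ)) x - φ x
        = ∑ i, (g i x - φ x i) • EuclideanSpace.single i (1:ℝ) := by
      have h2 : φ x = ∑ i, φ x i • EuclideanSpace.single i (1:ℝ) := by
        ext j
        simp [Pi.single_apply]
      conv_lhs => rw [h2]
      simp [sub_smul, Finset.sum_sub_distrib]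
    rw [h1]
    calc _ ≤ ∑ i : Fin k, ‖(g i x - φ x i) • EuclideanSpace.single i (1:ℝ)‖ := norm_sum_le _ _
      _ ≤ ∑ i : Fin k, ε / (k + 1) := by
        apply Finset.sum_le_sum
        intro i _
        rw [norm_smul, EuclideanSpace.norm_single]
        simpa using (hgd i x hx).le
      _ < ε := by
        simp only [Finset.sum_const, Finset.card_univ, Fintype.card_fin, nsmul_eq_mul]
        rw [mul_div_assoc', div_lt_iff₀ hk]
        nlinarith

end Approx

section Generic
variable {E F : Type*} [NormedAddCommGroup E] [NormedSpace ℝ E] [FiniteDimensional ℝ E]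
  [NormedAddCommGroup F] [NormedSpace ℝ F] [FiniteDimensional ℝ F]

/-- Affine transversality: after a small translation, all preimages of finitely many subspaces
under finitely many affine maps have the expected dimension. -/
lemma exists_generic {Λ σ : Type*} [Finite Λ] [Finite σ] (A : Λ → E →ᵃ[ℝ] F)
    (S : σ → Submodule ℝ F) (ε : ℝ) (hε : 0 < ε) :
    ∃ v : F, ‖v‖ < ε ∧ ∀ l s, (∀ x, A l x + v ∉ S s) ∨
      (Module.finrank ℝ ((S s).toAffineSubspace.comap (A l + AffineMap.const ℝ E v)).direction
        + Module.finrank ℝ F = Module.finrank ℝ E + Module.finrank ℝ (S s)) := by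
  classical
  let B : ∀ (_ : Λ) (s : σ), E →ᵃ[ℝ] F ⧸ S s := fun l s => (S s).mkQ.toAffineMap.comp (A l)
  let W : Λ × σ → AffineSubspace ℝ F := fun x =>
    if Function.Surjective (B x.1 x.2) then ⊥ else
      ((⊤ : AffineSubspace ℝ E).map (B x.1 x.2)).comap (-(S x.2).mkQ).toAffineMap
  have hW : ∀ x, W x ≠ ⊤ := by
    rintro ⟨l, s⟩ h
    simp only [W] at h
    split_ifs at h with hs
    · exact AffineSubspace.bot_ne_top _ _ _ h
    · apply hs
      intro z
      obtain ⟨w, hw⟩ := (S s).mkQ_surjective (-z)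
      have : w ∈ (⊤ : AffineSubspace ℝ F) := AffineSubspace.mem_top _ _ _
      rw [← h, AffineSubspace.mem_comap, AffineSubspace.mem_map] at this
      obtain ⟨x, -, hx⟩ := this
      refine ⟨x, ?_⟩
      rw [hx]
      simp only [LinearMap.coe_toAffineMap, LinearMap.neg_apply]
      rw [hw, neg_neg]
  obtain ⟨v, hv, hvW⟩ := exists_avoid W hW (ball 0 ε) isOpen_ball ⟨0, by simpa using hε⟩
  refine ⟨v, by simpa using hv, fun l s => ?_⟩
  have h1 := hvW (l, s)
  simp only [W] at h1
  split_ifs at h1 with hs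
  · right
    have hlin : Function.Surjective (B l s).linear := (AffineMap.linear_surjective_iff _).2 hs
    obtain ⟨x₀, hx₀⟩ := hs (-(S s).mkQ v)
    have hmem : A l x₀ + v ∈ S s := by
      rw [← (S s).ker_mkQ, LinearMap.mem_ker, map_add]
      have : (S s).mkQ (A l x₀) = -(S s).mkQ v := hx₀
      rw [this]; simp
    have hdir : ((S s).toAffineSubspace.comap (A l + AffineMap.const ℝ E v)).direction
        = LinearMap.ker (B l s).linear := by
      ext w
      have hx₀' : x₀ ∈ (S s).toAffineSubspace.comap (A l + AffineMap.const ℝ E v) := by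
        simpa using hmem
      rw [← AffineSubspace.vadd_mem_iff_mem_direction w hx₀']
      simp only [vadd_eq_add, AffineSubspace.mem_comap, LinearMap.mem_ker]
      have e1 : (A l + AffineMap.const ℝ E v) (w + x₀) = (A l).linear w + (A l x₀ + v) := by
        have := (A l).map_vadd x₀ w
        simp only [vadd_eq_add] at this
        simp [this, add_assoc]
      rw [e1]
      have e2 : (B l s).linear w = (S s).mkQ ((A l).linear w) := rfl
      rw [e2, ← LinearMap.mem_ker, (S s).ker_mkQ]
      exact (S s).add_mem_iff_left hmem
    rw [hdir]
    have h2 := LinearMap.finrank_range_add_finrank_ker (B l s).linear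
    rw [LinearMap.range_eq_top.2 hlin, finrank_top] at h2
    have h3 := (S s).finrank_quotient_add_finrank
    omega
  · left
    intro x hx
    apply h1
    rw [AffineSubspace.mem_comap, AffineSubspace.mem_map]
    refine ⟨x, AffineSubspace.mem_top _ _ _, ?_⟩
    rw [← (S s).ker_mkQ, LinearMap.mem_ker, map_add] at hx
    exact eq_neg_of_add_eq_zero_left hx

lemma exists_generic' {Λ σ : Type*} [Finite Λ] [Finite σ] (A : Λ → E →ᵃ[ℝ] F)
    (S : σ → Submodule ℝ F) (ε : ℝ) (hε : 0 < ε) (hE : 2 ≤ Module.finrank ℝ E) :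
    ∃ v : F, ‖v‖ < ε ∧ (∀ l s, Module.finrank ℝ (S s) + 2 ≤ Module.finrank ℝ F →
      Module.finrank ℝ ((S s).toAffineSubspace.comap (A l + AffineMap.const ℝ E v)).direction + 2
        ≤ Module.finrank ℝ E) ∧
      ∀ l s x, A l x + v ∈ S s →
        Module.finrank ℝ F ≤ Module.finrank ℝ E + Module.finrank ℝ (S s) := by
  obtain ⟨v, hv, h⟩ := exists_generic A S ε hε
  refine ⟨v, hv, fun l s hs => ?_, fun l s x hx => ?_⟩
  · rcases h l s with h1 | h1
    · have : (S s).toAffineSubspace.comap (A l + AffineMap.const ℝ E v) = ⊥ := by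
        apply SetLike.coe_injective
        rw [AffineSubspace.bot_coe]
        apply Set.eq_empty_of_forall_notMem
        intro x hx
        exact h1 x (by simpa using hx)
      rw [this, AffineSubspace.direction_bot, finrank_bot]
      omega
    · omega
  · rcases h l s with h1 | h1
    · exact absurd hx (h1 x)
    · omega

end Generic
end MCC

/-! ## Part C: pushing a map towards prescribed preimages -/
namespace MCC
open Set Metric

section Cone
variable {X : Type*} [MetricSpace X]
  {F : Type*} [NormedAddCommGroup F] [InnerProductSpace ℝ F]
  {ι : Type*} [Fintype ι] [DecidableEq ι]

lemma exists_kappa (K : Set X) (hK : IsClosed K) :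
    ∃ κ : X → ℝ, Continuous κ ∧ (∀ x, 0 ≤ κ x ∧ κ x ≤ 1) ∧ ∀ x, κ x = 1 ↔ x ∈ K := by
  rcases K.eq_empty_or_nonempty with rfl | hne
  · exact ⟨fun _ => 0, continuous_const, by simp, by simp⟩
  · have hpos : ∀ x, 0 < 1 + infDist x K := fun x => by
      have := infDist_nonneg (x := x) (s := K); linarith
    refine ⟨fun x => (1 + infDist x K)⁻¹, ?_, fun x => ?_, fun x => ?_⟩
    · exact (continuous_const.add (continuous_infDist_pt K)).inv₀ fun x => (hpos x).ne'
    · have := infDist_nonneg (x := x) (s := K)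
      exact ⟨(inv_pos.2 (hpos x)).le, inv_le_one_of_one_le₀ (by linarith)⟩
    · rw [inv_eq_one, hK.mem_iff_infDist_zero hne]
      constructor <;> intro h <;> linarith

lemma unit_smul_eq {u v : F} (hu : ‖u‖ = 1) (hv : ‖v‖ = 1) {s t : ℝ} (hs : 0 < s) (ht : 0 ≤ t)
    (h : s • u = t • v) : u = v := by
  have h1 : s = t := by
    have := congrArg norm h
    rw [norm_smul, norm_smul, hu, hv, Real.norm_of_nonneg hs.le, Real.norm_of_nonneg ht] at this
    linarith
  subst h1
  exact smul_right_injective F hs.ne' h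

lemma isClosed_cone (ψ : X → F) (hψ : Continuous ψ) (hψ0 : ∀ x, ψ x ≠ 0) (u v : F)
    (hu : ‖u‖ = 1) (hv : ‖v‖ = 1) (huv : u ≠ v) :
    IsClosed {x | ∃ α β : ℝ, 0 ≤ α ∧ 0 ≤ β ∧ ψ x = α • u - β • v} := by
  let w : unitInterval → F := fun τ => (1 - (τ : ℝ)) • u - (τ : ℝ) • v
  have hw : Continuous w := by fun_prop
  have hw0 : ∀ τ, w τ ≠ 0 := by
    intro τ h
    have h' : (1 - (τ : ℝ)) • u = (τ : ℝ) • v := sub_eq_zero.1 h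
    rcases lt_or_eq_of_le τ.2.2 with h1 | h1
    · exact huv (unit_smul_eq hu hv (by linarith) τ.2.1 h')
    · rw [h1] at h'
      simp at h'
      rw [← h'] at hv
      simp at hv
  have : {x | ∃ α β : ℝ, 0 ≤ α ∧ 0 ≤ β ∧ ψ x = α • u - β • v}
      = Prod.fst '' {z : X × unitInterval | ‖w z.2‖ • ψ z.1 = ‖ψ z.1‖ • w z.2} := by
    ext x
    simp only [mem_ofPred_eq, mem_image, Prod.exists, exists_and_right, exists_eq_right]
    constructor
    · rintro ⟨α, β, hα, hβ, h⟩
      have hpos : 0 < α + β := by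
        rcases eq_or_lt_of_le (add_nonneg hα hβ) with h0 | h0
        · exfalso
          apply hψ0 x
          have h1 : α = 0 := by linarith
          have h2 : β = 0 := by linarith
          rw [h, h1, h2]; simp
        · exact h0
      let τ : unitInterval := ⟨β / (α + β), by positivity, by
        rw [div_le_one hpos]; linarith⟩
      have h1 : ψ x = (α + β) • w τ := by
        rw [h]
        simp only [w, τ, smul_sub, smul_smul]
        congr 2 <;> field_simp
        ring
      refine ⟨τ, ?_⟩
      rw [h1, norm_smul, Real.norm_of_nonneg hpos.le, smul_smul, mul_comm]
    · rintro ⟨τ, h⟩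
      have hn : ‖w τ‖ ≠ 0 := norm_ne_zero_iff.2 (hw0 τ)
      refine ⟨‖w τ‖⁻¹ * (‖ψ x‖ * (1 - τ)), ‖w τ‖⁻¹ * (‖ψ x‖ * τ), ?_, ?_, ?_⟩
      · have := τ.2.2
        have : 0 ≤ 1 - (τ:ℝ) := by linarith
        positivity
      · have := τ.2.1
        positivity
      · have : ψ x = ‖w τ‖⁻¹ • (‖ψ x‖ • w τ) := by
          rw [← h, smul_smul, inv_mul_cancel₀ hn, one_smul]
        refine this.trans ?_
        have hw' : w τ = (1 - (τ : ℝ)) • u - (τ : ℝ) • v := rfl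
        conv_lhs => rw [hw']
        simp only [smul_sub, smul_smul]
        rw [← hw']
  rw [this]
  apply isClosedMap_fst_of_compactSpace
  exact isClosed_eq (by fun_prop) (by fun_prop)

lemma cone_final [Nontrivial ι] (y : ι → F) (hy : ∀ i, ‖y i‖ = 1) (hinj : Function.Injective y)
    (ψ : X → F) (hψ : Continuous ψ) (hψ0 : ∀ x, ψ x ≠ 0)
    (K : ι → Set X) (hK : ∀ i, IsClosed (K i)) (hdisj : ∀ i j, i ≠ j → Disjoint (K i) (K j))
    (hL : ∀ x i, ∀ s : ℝ, 0 < s → ψ x = s • y i → x ∈ K i)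
    (hC : ∀ x i j, x ∈ K i → j ≠ i → ∀ α β : ℝ, 0 ≤ α → 0 ≤ β → ψ x ≠ α • y j - β • y i) :
    ∃ θ : X → F, Continuous θ ∧ (∀ x, ∀ t ∈ Icc (0:ℝ) 1, ψ x + t • θ x ≠ 0) ∧
      (∀ x i, (∃ s : ℝ, 0 < s ∧ ψ x + θ x = s • y i) ↔ x ∈ K i) ∧
      (∀ x i, x ∈ K i → ψ x + θ x = y i) := by
  classical
  let C : ι → Set X := fun i => ⋃ j ∈ (Finset.univ.erase i : Finset ι),
    {x | ∃ α β : ℝ, 0 ≤ α ∧ 0 ≤ β ∧ ψ x = α • y j - β • y i}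
  have hCc : ∀ i, IsClosed (C i) := fun i => by
    apply Set.Finite.isClosed_biUnion (Finset.finite_toSet _)
    intro j hj
    exact isClosed_cone ψ hψ hψ0 _ _ (hy j) (hy i) (hinj.ne (by simpa using hj))
  have hCmem : ∀ x i j, j ≠ i → ∀ α β : ℝ, 0 ≤ α → 0 ≤ β → ψ x = α • y j - β • y i → x ∈ C i := by
    intro x i j hj α β hα hβ h
    simp only [C, mem_iUnion]
    exact ⟨j, by simpa using hj, α, β, hα, hβ, h⟩
  have hCneg : ∀ x i, ∀ β : ℝ, 0 ≤ β → ψ x = - (β • y i) → x ∈ C i := by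
    intro x i β hβ h
    obtain ⟨j, hj⟩ := exists_ne i
    exact hCmem x i j hj 0 β le_rfl hβ (by simpa using h)
  let D : ι → Set X := fun i => C i ∪ ⋃ j ∈ (Finset.univ.erase i : Finset ι), K j
  have hDc : ∀ i, IsClosed (D i) := fun i =>
    (hCc i).union (Set.Finite.isClosed_biUnion (Finset.finite_toSet _) fun j _ => hK j)
  have hDK : ∀ i, Disjoint (D i) (K i) := by
    intro i
    rw [Set.disjoint_left]
    rintro x (hx | hx) hxK
    · simp only [C, mem_iUnion] at hx
      obtain ⟨j, hj, α, β, hα, hβ, h⟩ := hx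
      exact hC x i j hxK (by simpa using hj) α β hα hβ h
    · simp only [mem_iUnion] at hx
      obtain ⟨j, hj, h⟩ := hx
      exact Set.disjoint_left.1 (hdisj j i (by simpa using hj)) h hxK
  have hu := fun i => exists_continuous_zero_one_of_isClosed (hDc i) (hK i) (hDK i)
  choose u hu0 hu1 huI using hu
  have hκ := fun i => exists_kappa (K i) (hK i)
  choose κ hκc hκI hκ1 using hκ
  let ρ : ι → X → ℝ := fun i x => κ i x * max 0 (u i x - ∑ j ∈ Finset.univ.erase i, u j x)
  have hρc : ∀ i, Continuous (ρ i) := fun i =>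
    (hκc i).mul (continuous_const.max ((u i).continuous.sub
      (continuous_finsetSum _ fun j _ => (u j).continuous)))
  have hsum0 : ∀ i x, 0 ≤ ∑ j ∈ Finset.univ.erase i, u j x := fun i x =>
    Finset.sum_nonneg fun j _ => (huI j x).1
  have hm1 : ∀ i x, max 0 (u i x - ∑ j ∈ Finset.univ.erase i, u j x) ≤ 1 := fun i x =>
    max_le zero_le_one (by linarith [hsum0 i x, (huI i x).2])
  have hρ0 : ∀ i x, 0 ≤ ρ i x := fun i x => mul_nonneg (hκI i x).1 (le_max_left _ _)
  have hρ1 : ∀ i x, ρ i x ≤ 1 := fun i x => by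
    have := mul_le_mul (hκI i x).2 (hm1 i x) (le_max_left _ _) zero_le_one
    simpa [ρ] using this
  have hρC : ∀ i x, x ∈ C i → ρ i x = 0 := fun i x hx => by
    have h1 : u i x = 0 := hu0 i (Or.inl hx)
    have : max 0 (u i x - ∑ j ∈ Finset.univ.erase i, u j x) = 0 :=
      max_eq_left (by linarith [hsum0 i x])
    simp only [ρ, this, mul_zero]
  have hρK : ∀ i x, x ∈ K i → ρ i x = 1 := fun i x hx => by
    have h1 : u i x = 1 := hu1 i hx
    have h2 : ∑ j ∈ Finset.univ.erase i, u j x = 0 := Finset.sum_eq_zero fun j hj =>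
      hu0 j (Or.inr (by
        simp only [mem_iUnion]
        exact ⟨i, by simpa using (Finset.ne_of_mem_erase hj).symm, hx⟩))
    simp only [ρ, h1, h2, (hκ1 i x).2 hx]; norm_num
  have hρK' : ∀ i x, ρ i x = 1 → x ∈ K i := fun i x hx => by
    rw [← hκ1]
    apply le_antisymm (hκI i x).2
    calc 1 = ρ i x := hx.symm
      _ ≤ κ i x * 1 := mul_le_mul_of_nonneg_left (hm1 i x) (hκI i x).1
      _ = κ i x := mul_one _
  have hρuniq : ∀ i k x, ρ i x ≠ 0 → ρ k x ≠ 0 → i = k := by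
    have key : ∀ i k x, i ≠ k → ρ i x ≠ 0 → u k x < u i x := by
      intro i k x hik h
      by_contra hle
      push Not at hle
      apply h
      have : u k x ≤ ∑ j ∈ Finset.univ.erase i, u j x :=
        Finset.single_le_sum (f := fun j => u j x) (fun j _ => (huI j x).1)
          (Finset.mem_erase.2 ⟨hik.symm, Finset.mem_univ _⟩)
      have : max 0 (u i x - ∑ j ∈ Finset.univ.erase i, u j x) = 0 :=
        max_eq_left (by linarith)
      simp only [ρ, this, mul_zero]
    intro i k x h1 h2
    by_contra hik
    exact lt_asymm (key i k x hik h1) (key k i x (Ne.symm hik) h2)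
  let θ : X → F := fun x => ∑ i, ρ i x • (y i - ψ x)
  have hθ : ∀ i x, ρ i x ≠ 0 → θ x = ρ i x • (y i - ψ x) := fun i x h => by
    apply Finset.sum_eq_single_of_mem i (Finset.mem_univ _)
    intro j _ hj
    have : ρ j x = 0 := by
      by_contra hne
      exact hj (hρuniq j i x hne h)
    simp [this]
  have hθ0 : ∀ x, (∀ i, ρ i x = 0) → θ x = 0 := fun x h =>
    Finset.sum_eq_zero fun i _ => by simp [h i]
  have hKθ : ∀ x i, x ∈ K i → ψ x + θ x = y i := fun x i hx => by
    have := hρK i x hx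
    rw [hθ i x (by simp [this]), this]
    simp
  refine ⟨θ, continuous_finsetSum _ fun i _ => (hρc i).smul (continuous_const.sub hψ), ?_, ?_, hKθ⟩
  · intro x t ht h
    by_cases hall : ∀ i, ρ i x = 0
    · rw [hθ0 x hall] at h
      simp at h
      exact hψ0 x h
    · push Not at hall
      obtain ⟨i, hi⟩ := hall
      rw [hθ i x hi] at h
      have hlt : t * ρ i x ≤ 1 := mul_le_one₀ ht.2 (hρ0 i x) (hρ1 i x)
      have h0 : 0 ≤ t * ρ i x := mul_nonneg ht.1 (hρ0 i x)
      have h' : (1 - t * ρ i x) • ψ x = - ((t * ρ i x) • y i) := by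
        rw [eq_neg_iff_add_eq_zero, ← h]; module
      rcases eq_or_lt_of_le hlt with h1 | h1
      · rw [h1] at h'
        simp at h'
        have := hy i
        rw [h'] at this; simp at this
      · have h2 : (1 - t * ρ i x) ≠ 0 := by linarith
        have h2' : 0 < (1 - t * ρ i x) := by linarith
        apply hi
        apply hρC
        apply hCneg x i ((1 - t * ρ i x)⁻¹ * (t * ρ i x)) (by positivity)
        rw [← smul_smul, ← smul_neg, ← h', smul_smul, inv_mul_cancel₀ h2, one_smul]
  · intro x k
    refine ⟨?_, fun hx => ⟨1, one_pos, by rw [hKθ x k hx, one_smul]⟩⟩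
    rintro ⟨s, hs, h⟩
    by_cases hall : ∀ i, ρ i x = 0
    · rw [hθ0 x hall, add_zero] at h
      exact hL x k s hs h
    push Not at hall
    obtain ⟨i, hi⟩ := hall
    rw [hθ i x hi] at h
    have h' : (1 - ρ i x) • ψ x = s • y k - ρ i x • y i := by
      rw [← h]; module
    rcases eq_or_lt_of_le (hρ1 i x) with h1 | h1
    · rw [h1] at h'
      have hx : y i = y k := by
        symm
        apply unit_smul_eq (hy k) (hy i) hs zero_le_one
        simpa [sub_eq_zero, eq_comm] using h'
      rw [← hinj hx]
      exact hρK' i x h1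
    · have h2' : 0 < (1 - ρ i x) := by linarith
      have h3 : ψ x = ((1 - ρ i x)⁻¹ * s) • y k - ((1 - ρ i x)⁻¹ * ρ i x) • y i := by
        rw [← smul_smul, ← smul_smul, ← smul_sub, ← h', smul_smul, inv_mul_cancel₀ h2'.ne', one_smul]
      have h0 := hρ0 i x
      by_cases hki : k = i
      · subst hki
        rw [← sub_smul, ← mul_sub] at h3
        rcases lt_or_ge 0 (s - ρ k x) with h4 | h4
        · exact hL x k _ (by positivity) h3
        · exfalso
          apply hi
          apply hρC
          apply hCneg x k ((1 - ρ k x)⁻¹ * (ρ k x - s))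
          · have : 0 ≤ ρ k x - s := by linarith
            positivity
          · rw [h3, ← neg_smul]; congr 1; ring
      · exfalso
        apply hi
        apply hρC
        exact hCmem x i k hki _ _ (by positivity) (by positivity) h3

end Cone
end MCC

/-! ## Part B: connecting preimages by segments -/
namespace MCC
open Set Metric

section Outer
variable {E : Type*} [NormedAddCommGroup E] [NormedSpace ℝ E]

lemma joinedIn_outer (hE : 1 < Module.rank ℝ E) {R : ℝ} (hR : 0 < R) {x x' : E}
    (hx : R ≤ ‖x‖) (hx' : R ≤ ‖x'‖) : JoinedIn {z : E | R ≤ ‖z‖} x x' := by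
  have key : ∀ z : E, R ≤ ‖z‖ → ∃ w ∈ sphere (0:E) R, JoinedIn {z : E | R ≤ ‖z‖} z w := by
    intro z hz
    have hz0 : 0 < ‖z‖ := hR.trans_le hz
    have hw : ‖(R / ‖z‖) • z‖ = R := by
      rw [norm_smul, Real.norm_of_nonneg (by positivity)]; field_simp
    refine ⟨(R / ‖z‖) • z, by simpa using hw, JoinedIn.of_segment_subset ?_⟩
    rintro w ⟨a, b, ha, hb, hab, rfl⟩
    change R ≤ _
    rw [smul_smul, ← add_smul, norm_smul, Real.norm_of_nonneg (by positivity), add_mul]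
    have : b * (R / ‖z‖) * ‖z‖ = b * R := by field_simp
    rw [this]
    calc R = a * R + b * R := by rw [← add_mul, hab, one_mul]
      _ ≤ _ := by gcongr
  obtain ⟨w, hw, h1⟩ := key x hx
  obtain ⟨w', hw', h2⟩ := key x' hx'
  have h3 := (isPathConnected_sphere hE (0:E) hR.le).joinedIn w hw w' hw'
  exact (h1.trans (h3.mono fun z hz => by simp at hz; simp [hz])).trans h2.symm

end Outer

section Build
variable {E : Type*} [NormedAddCommGroup E] [InnerProductSpace ℝ E] [FiniteDimensional ℝ E]
  {ι : Type*} [DecidableEq ι] [Finite ι]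

/-- Abstract form of the construction of the connected sets `K i`. -/
lemma build_K (hE : 1 < Module.rank ℝ E) {R : ℝ} (hR : 0 < R) (i0 : ι)
    {β : Type*} (Z : β → AffineSubspace ℝ E)
    (γ : ι → Type*) [∀ i, Finite (γ i)] (C : ∀ i, γ i → Set E) (hconv : ∀ i l, Convex ℝ (C i l))
    (M : ι → Set E) (hM : ∀ i, i ≠ i0 → M i = ⋃ l, C i l)
    (hM0 : M i0 = (⋃ l, C i0 l) ∪ {x | R ≤ ‖x‖})
    (hMc : ∀ i, IsClosed (M i)) (hMd : ∀ i k, i ≠ k → Disjoint (M i) (M k))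
    (hCZ : ∀ i l, ∀ x ∈ C i l, ∃ b, x ∈ Z b)
    (p : ∀ i, γ i → E) (hp : ∀ i l, p i l ∈ C i l) (r : ∀ i, γ i → E)
    (o : E) (hr0 : ∀ l, R ≤ ‖r i0 l‖)
    (hri : ∀ i, i ≠ i0 → ∃ o, ‖o‖ < R ∧ ∀ l, r i l = o)
    (g1 : ∀ i l b, ∀ q ∈ segment ℝ (r i l) (p i l), q ∈ Z b → q = p i l)
    (g2 : ∀ i k l l', i ≠ k → ∀ q ∈ segment ℝ (r i l) (p i l), q ∈ segment ℝ (r k l') (p k l') →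
      q = p i l ∨ q = p k l' ∨ R ≤ ‖q‖) :
    ∃ K : ι → Set E, (∀ i, IsClosed (K i)) ∧ (∀ i k, i ≠ k → Disjoint (K i) (K k)) ∧
      (∀ i, M i ⊆ K i) ∧ (∀ i, ∀ x ∈ K i, x ∈ M i ∨ (‖x‖ < R ∧ ∀ b, x ∉ Z b)) ∧
      (∀ i, ∀ x ∈ K i, ∀ x' ∈ K i, JoinedIn (K i) x x') := by
  have hCM : ∀ i l, C i l ⊆ M i := fun i l x hx => by
    by_cases hi : i = i0
    · subst hi; rw [hM0]; exact Or.inl (mem_iUnion.2 ⟨l, hx⟩)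
    · rw [hM i hi]; exact mem_iUnion.2 ⟨l, hx⟩
  have hnorm : ∀ i, i ≠ i0 → ∀ x ∈ M i, ‖x‖ < R := fun i hi x hx => by
    by_contra h
    exact Set.disjoint_left.1 (hMd i i0 hi) hx (by rw [hM0]; exact Or.inr (not_lt.1 h))
  have hMZ : ∀ i, ∀ x ∈ M i, ‖x‖ < R → ∃ b, x ∈ Z b := fun i x hx hxR => by
    have : x ∈ ⋃ l, C i l := by
      by_cases hi : i = i0
      · subst hi; rw [hM0] at hx
        rcases hx with h | h
        · exact h
        · exact absurd hxR (not_lt.2 h)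
      · rw [hM i hi] at hx; exact hx
    obtain ⟨l, hl⟩ := mem_iUnion.1 this
    exact hCZ i l x hl
  have hseg : ∀ i l, ∀ q ∈ segment ℝ (r i l) (p i l), q ∈ M i ∨ (‖q‖ < R ∧ ∀ b, q ∉ Z b) := by
    intro i l q hq
    by_cases hb : ∃ b, q ∈ Z b
    · obtain ⟨b, hb⟩ := hb
      left
      rw [g1 i l b q hq hb]
      exact hCM i l (hp i l)
    · push Not at hb
      by_cases hi : i = i0
      · subst hi
        rcases lt_or_ge ‖q‖ R with h | h
        · exact Or.inr ⟨h, hb⟩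
        · left; rw [hM0]; exact Or.inr h
      · right
        refine ⟨?_, hb⟩
        obtain ⟨o, ho, hol⟩ := hri i hi
        have h1 : r i l ∈ ball (0:E) R := by simpa [hol l] using ho
        have h2 : p i l ∈ ball (0:E) R := by simpa using hnorm i hi _ (hCM i l (hp i l))
        simpa using (convex_ball (0:E) R).segment_subset h1 h2 hq
  let K : ι → Set E := fun i => M i ∪ ⋃ l, segment ℝ (r i l) (p i l)
  have hKs : ∀ i l, segment ℝ (r i l) (p i l) ⊆ K i := fun i l q hq =>
    Or.inr (mem_iUnion.2 ⟨l, hq⟩)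
  have hKprop : ∀ i, ∀ x ∈ K i, x ∈ M i ∨ (‖x‖ < R ∧ ∀ b, x ∉ Z b) := by
    rintro i x (h | h)
    · exact Or.inl h
    · obtain ⟨l, hl⟩ := mem_iUnion.1 h
      exact hseg i l x hl
  refine ⟨K, fun i => ?_, fun i k hik => ?_, fun i => subset_union_left, hKprop, ?_⟩
  · refine (hMc i).union (isClosed_iUnion_of_finite fun l => ?_)
    rw [segment_eq_image_lineMap]
    exact (isCompact_Icc.image (by fun_prop)).isClosed
  · rw [Set.disjoint_left]
    intro x hxi hxk
    rcases hKprop i x hxi with h1 | h1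
    · rcases hKprop k x hxk with h2 | h2
      · exact Set.disjoint_left.1 (hMd i k hik) h1 h2
      · obtain ⟨b, hb⟩ := hMZ i x h1 h2.1
        exact h2.2 b hb
    · rcases hKprop k x hxk with h2 | h2
      · obtain ⟨b, hb⟩ := hMZ k x h2 h1.1
        exact h1.2 b hb
      · have h3 : ∀ j, x ∈ K j → ∃ l, x ∈ segment ℝ (r j l) (p j l) := by
          rintro j (h | h)
          · obtain ⟨b, hb⟩ := hMZ j x h h1.1
            exact absurd hb (h1.2 b)
          · exact mem_iUnion.1 h
        obtain ⟨l, hl⟩ := h3 i hxi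
        obtain ⟨l', hl'⟩ := h3 k hxk
        rcases g2 i k l l' hik x hl hl' with h | h | h
        · obtain ⟨b, hb⟩ := hCZ i l _ (hp i l)
          exact h1.2 b (h ▸ hb)
        · obtain ⟨b, hb⟩ := hCZ k l' _ (hp k l')
          exact h1.2 b (h ▸ hb)
        · linarith [h1.1]
  · intro i
    have hjoin : ∀ l, ∀ q ∈ segment ℝ (r i l) (p i l), JoinedIn (K i) q (r i l) := by
      intro l q hq
      refine (JoinedIn.of_segment_subset ?_).mono (hKs i l)
      exact (convex_segment _ _).segment_subset hq (left_mem_segment _ _ _)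
    have hjoinC : ∀ l, ∀ x ∈ C i l, JoinedIn (K i) x (r i l) := by
      intro l x hx
      have h1 : JoinedIn (K i) x (p i l) :=
        (JoinedIn.of_segment_subset ((hconv i l).segment_subset hx (hp i l))).mono
          ((hCM i l).trans subset_union_left)
      exact h1.trans (hjoin l _ (right_mem_segment _ _ _))
    by_cases hi : i = i0
    · subst hi
      have hout : ∀ z : E, R ≤ ‖z‖ → ∀ z' : E, R ≤ ‖z'‖ → JoinedIn (K i) z z' := by
        intro z hz z' hz'
        refine (joinedIn_outer hE hR hz hz').mono fun w hw => Or.inl ?_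
        rw [hM0]; exact Or.inr hw
      have hex : ∀ x ∈ K i, ∃ z : E, R ≤ ‖z‖ ∧ JoinedIn (K i) x z := by
        rintro x (h | h)
        · rw [hM0] at h
          rcases h with h | h
          · obtain ⟨l, hl⟩ := mem_iUnion.1 h
            exact ⟨_, hr0 l, hjoinC l x hl⟩
          · exact ⟨x, h, hout x h x h⟩
        · obtain ⟨l, hl⟩ := mem_iUnion.1 h
          exact ⟨_, hr0 l, hjoin l x hl⟩
      intro x hx x' hx'
      obtain ⟨z, hz, h1⟩ := hex x hx
      obtain ⟨z', hz', h2⟩ := hex x' hx'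
      exact (h1.trans (hout z hz z' hz')).trans h2.symm
    · obtain ⟨o, -, ho⟩ := hri i hi
      have hex : ∀ x ∈ K i, JoinedIn (K i) x o := by
        rintro x (h | h)
        · rw [hM i hi] at h
          obtain ⟨l, hl⟩ := mem_iUnion.1 h
          exact ho l ▸ hjoinC l x hl
        · obtain ⟨l, hl⟩ := mem_iUnion.1 h
          exact ho l ▸ hjoin l x hl
      intro x hx x' hx'
      exact (hex x hx).trans (hex x' hx').symm

lemma mem_segment_iff_param {o p q : E} (h : q ∈ segment ℝ o p) :
    ∃ t : ℝ, 0 ≤ t ∧ t ≤ 1 ∧ q = o + t • (p - o) := by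
  rw [segment_eq_image'] at h
  obtain ⟨t, ht, rfl⟩ := h
  exact ⟨t, ht.1, ht.2, rfl⟩

/-- Sequential choice of centers in general position. -/
lemma exists_centers {β : Type*} [Finite β] (Z : β → AffineSubspace ℝ E)
    (hZ : ∀ b, Module.finrank ℝ (Z b).direction + 2 ≤ Module.finrank ℝ E)
    (γ : ι → Type*) [∀ i, Finite (γ i)] (p : ∀ i, γ i → E)
    (hdim : ∀ i, Nonempty (γ i) → 3 ≤ Module.finrank ℝ E)
    (U : ι → Set E) (hU : ∀ i, IsOpen (U i)) (hne : ∀ i, (U i).Nonempty) :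
    ∃ o : ι → E, (∀ i, o i ∈ U i) ∧
      (∀ i b l, ∀ t : ℝ, o i + t • (p i l - o i) ∈ Z b → t = 1) ∧
      (∀ i k l l', i ≠ k → ∀ t t' : ℝ, o i + t • (p i l - o i) = o k + t' • (p k l' - o k) →
        t = 1 ∨ t' = 1) := by
  classical
  have := Fintype.ofFinite ι
  suffices H : ∀ s : Finset ι, ∃ o : ι → E, (∀ i ∈ s, o i ∈ U i) ∧
      (∀ i ∈ s, ∀ b l, ∀ t : ℝ, o i + t • (p i l - o i) ∈ Z b → t = 1) ∧
      (∀ i ∈ s, ∀ k ∈ s, ∀ l l', i ≠ k → ∀ t t' : ℝ,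
        o i + t • (p i l - o i) = o k + t' • (p k l' - o k) → t = 1 ∨ t' = 1) by
    obtain ⟨o, h1, h2, h3⟩ := H Finset.univ
    exact ⟨o, fun i => h1 i (Finset.mem_univ _), fun i => h2 i (Finset.mem_univ _),
      fun i k => h3 i (Finset.mem_univ _) k (Finset.mem_univ _)⟩
  intro s
  induction s using Finset.induction_on with
  | empty => exact ⟨fun _ => 0, by simp, by simp, by simp⟩
  | insert a s ha ih =>
    obtain ⟨o, h1, h2, h3⟩ := ih
    let Z' : β ⊕ (Σ k, γ k) → AffineSubspace ℝ E :=
      Sum.elim Z (fun kl => affineSpan ℝ {o kl.1, p kl.1 kl.2})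
    have hZ' : ∀ b, Module.finrank ℝ (Z' b).direction + 2 ≤ Module.finrank ℝ E := by
      rintro (b | ⟨k, l⟩)
      · exact hZ b
      · have h3 := hdim k ⟨l⟩
        have : Module.finrank ℝ (affineSpan ℝ {o k, p k l}).direction ≤ 1 := by
          rw [direction_affineSpan, vectorSpan_pair]
          exact (finrank_span_le_card _).trans (by simp)
        change Module.finrank ℝ (affineSpan ℝ {o k, p k l}).direction + 2 ≤ _
        omega
    obtain ⟨c, hcU, -, hc⟩ := exists_center Z' hZ' (p a) (U a) (hU a) (hne a)
    have key : ∀ k ∈ s, ∀ l l', ∀ t t' : ℝ, c + t • (p a l - c) = o k + t' • (p k l' - o k) →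
        t = 1 := by
      intro k hk l l' t t' h
      refine (hc (Sum.inr ⟨k, l'⟩) l t ?_).1
      rw [h]
      change _ ∈ affineSpan ℝ {o k, p k l'}
      rw [add_comm]
      exact AffineMap.lineMap_mem_affineSpan_pair t' (o k) (p k l')
    have hne' : ∀ i ∈ s, i ≠ a := fun i hi h => ha (h ▸ hi)
    refine ⟨Function.update o a c, ?_, ?_, ?_⟩
    · intro i hi
      rcases Finset.mem_insert.1 hi with rfl | hi
      · simpa using hcU
      · simpa [hne' i hi] using h1 i hi
    · intro i hi b l t
      rcases Finset.mem_insert.1 hi with rfl | hi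
      · simp only [Function.update_self]
        intro h
        exact (hc (Sum.inl b) l t h).1
      · simpa [hne' i hi] using h2 i hi b l t
    · intro i hi k hk l l' hik t t'
      rcases Finset.mem_insert.1 hi with rfl | hi2
      · rcases Finset.mem_insert.1 hk with rfl | hk
        · exact absurd rfl hik
        · simp only [Function.update_self, Function.update_of_ne (hne' k hk)]
          intro h
          exact Or.inl (key k hk l l' t t' h)
      · rcases Finset.mem_insert.1 hk with rfl | hk
        · simp only [Function.update_self, Function.update_of_ne (hne' i hi2)]
          intro h
          exact Or.inr (key i hi2 l' l t' t h.symm)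
        · simpa [hne' i hi2, hne' k hk] using h3 i hi2 k hk l l' hik t t'

/-- The sets `K i`: main construction. -/
lemma exists_K (hE : 1 < Module.rank ℝ E) {R : ℝ} (hR : 0 < R) (i0 : ι)
    {β : Type*} [Finite β] (Z : β → AffineSubspace ℝ E)
    (hZ : ∀ b, Module.finrank ℝ (Z b).direction + 2 ≤ Module.finrank ℝ E)
    (γ : ι → Type*) [∀ i, Finite (γ i)] (C : ∀ i, γ i → Set E) (hconv : ∀ i l, Convex ℝ (C i l))
    (hCne : ∀ i l, (C i l).Nonempty)
    (M : ι → Set E) (hM : ∀ i, i ≠ i0 → M i = ⋃ l, C i l)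
    (hM0 : M i0 = (⋃ l, C i0 l) ∪ {x | R ≤ ‖x‖})
    (hMc : ∀ i, IsClosed (M i)) (hMd : ∀ i k, i ≠ k → Disjoint (M i) (M k))
    (hCZ : ∀ i l, ∀ x ∈ C i l, ∃ b, x ∈ Z b)
    (hcase : (∀ i, Nonempty (γ i) → 3 ≤ Module.finrank ℝ E) ∨
      ∃ i1, i1 ≠ i0 ∧ ∀ i, i = i0 ∨ i = i1) :
    ∃ K : ι → Set E, (∀ i, IsClosed (K i)) ∧ (∀ i k, i ≠ k → Disjoint (K i) (K k)) ∧
      (∀ i, M i ⊆ K i) ∧ (∀ i, ∀ x ∈ K i, x ∈ M i ∨ (‖x‖ < R ∧ ∀ b, x ∉ Z b)) ∧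
      (∀ i, ∀ x ∈ K i, ∀ x' ∈ K i, JoinedIn (K i) x x') := by
  choose p hp using hCne
  rcases hcase with hdim | ⟨i1, hi1, hall⟩
  · have hnt : Nontrivial E := by
      rw [← rank_pos_iff_nontrivial (R := ℝ)]
      exact zero_lt_one.trans hE
    let U : ι → Set E := fun i => if i = i0 then {x | R < ‖x‖} else ball 0 R
    obtain ⟨o, hoU, ho1, ho2⟩ := exists_centers Z hZ γ p hdim U (by
        intro i
        simp only [U]
        split_ifs
        · exact isOpen_lt continuous_const continuous_norm
        · exact isOpen_ball) (by
        intro i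
        simp only [U]
        split_ifs
        · obtain ⟨x, hx⟩ := NormedSpace.exists_lt_norm ℝ E R
          exact ⟨x, hx⟩
        · exact ⟨0, by simpa using hR⟩)
    apply build_K hE hR i0 Z γ C hconv M hM hM0 hMc hMd hCZ p hp (fun i _ => o i) 0
    · intro l
      have := hoU i0
      simp only [U, if_true] at this
      exact le_of_lt this
    · intro i hi
      have := hoU i
      simp only [U, if_neg hi] at this
      exact ⟨o i, by simpa using this, fun _ => rfl⟩
    · intro i l b q hq hqb
      obtain ⟨t, -, -, rfl⟩ := mem_segment_iff_param hq
      rw [ho1 i b l t hqb]; simp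
    · intro i k l l' hik q hq hq'
      obtain ⟨t, -, -, h⟩ := mem_segment_iff_param hq
      obtain ⟨t', -, -, h'⟩ := mem_segment_iff_param hq'
      rcases ho2 i k l l' hik t t' (h.symm.trans h') with rfl | rfl
      · left; rw [h]; simp
      · right; left; rw [h']; simp
  · obtain ⟨o, hoU, hoZ, hoc⟩ := exists_center Z hZ (fun c : (Σ i, γ i) => p c.1 c.2) (ball 0 R)
      isOpen_ball ⟨0, by simpa using hR⟩
    have hpo : ∀ i l, p i l - o ≠ 0 := by
      intro i l h
      obtain ⟨b, hb⟩ := hCZ i l _ (hp i l)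
      exact hoZ b (sub_eq_zero.1 h ▸ hb)
    have hS : ∀ i l, ∃ S : ℝ, 1 ≤ S ∧ R ≤ ‖o + S • (p i l - o)‖ := by
      intro i l
      have hpos : 0 < ‖p i l - o‖ := norm_pos_iff.2 (hpo i l)
      have hoR : ‖o‖ < R := by simpa using hoU
      refine ⟨max 1 (2 * R / ‖p i l - o‖), le_max_left _ _, ?_⟩
      have h1 : 2 * R ≤ ‖(max 1 (2 * R / ‖p i l - o‖)) • (p i l - o)‖ := by
        rw [norm_smul, Real.norm_of_nonneg (by positivity)]
        calc 2 * R = 2 * R / ‖p i l - o‖ * ‖p i l - o‖ := by field_simp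
          _ ≤ _ := by gcongr; exact le_max_right _ _
      have h2 := norm_sub_norm_le ((max 1 (2 * R / ‖p i l - o‖)) • (p i l - o)) (-o)
      rw [norm_neg, sub_neg_eq_add, add_comm _ o] at h2
      linarith
    choose S hS1 hSR using hS
    let r : ∀ i, γ i → E := fun i l => if i = i0 then o + S i l • (p i l - o) else o
    -- parametrisation of points on the segments
    have hpar : ∀ i l, ∀ q ∈ segment ℝ (r i l) (p i l), ∃ t : ℝ, q = o + t • (p i l - o) ∧
        (i = i0 → 1 ≤ t) ∧ (i ≠ i0 → 0 ≤ t ∧ t ≤ 1) := by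
      intro i l q hq
      by_cases hi : i = i0
      · have hrr : r i l = o + S i l • (p i l - o) := if_pos hi
        rw [hrr] at hq
        obtain ⟨t, ht0, ht1, rfl⟩ := mem_segment_iff_param hq
        refine ⟨(1 - t) * S i l + t, by module, fun _ => ?_, fun h => absurd hi h⟩
        nlinarith [hS1 i l]
      · have hrr : r i l = o := if_neg hi
        rw [hrr] at hq
        obtain ⟨t, ht0, ht1, rfl⟩ := mem_segment_iff_param hq
        exact ⟨t, rfl, fun h => absurd h hi, fun _ => ⟨ht0, ht1⟩⟩
    have key : ∀ l l', ∀ q ∈ segment ℝ (r i0 l) (p i0 l), q ∈ segment ℝ (r i1 l') (p i1 l') →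
        q = p i0 l := by
      intro l l' q hq hq'
      obtain ⟨s, hs, hs1, -⟩ := hpar i0 l q hq
      obtain ⟨t, ht, -, ht1⟩ := hpar i1 l' q hq'
      have hs1 := hs1 rfl
      obtain ⟨ht0, ht1⟩ := ht1 hi1
      have heq : s • (p i0 l - o) = t • (p i1 l' - o) := add_left_cancel (hs.symm.trans ht)
      have htne : t ≠ 0 := by
        rintro rfl
        rw [zero_smul, smul_eq_zero] at heq
        rcases heq with h | h
        · linarith
        · exact hpo _ _ h
      obtain ⟨b, hb⟩ := hCZ i1 l' _ (hp i1 l')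
      have h1 : p i1 l' = o + (t⁻¹ * s) • (p i0 l - o) := by
        rw [← smul_smul, heq, smul_smul, inv_mul_cancel₀ htne]; simp
      rw [h1] at hb
      have h2 := (hoc b ⟨i0, l⟩ _ hb).1
      have h3 : s = t := by
        field_simp at h2; exact h2
      have : s = 1 := by linarith
      rw [hs, this]; simp
    apply build_K hE hR i0 Z γ C hconv M hM hM0 hMc hMd hCZ p hp r 0
    · intro l
      simp only [r, if_true]
      exact hSR i0 l
    · intro i hi
      exact ⟨o, by simpa using hoU, fun l => if_neg hi⟩
    · intro i l b q hq hqb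
      obtain ⟨t, rfl, -⟩ := hpar i l q hq
      rw [(hoc b ⟨i, l⟩ t hqb).1]; simp
    · intro i k l l' hik q hq hq'
      rcases hall i with rfl | rfl
      · rcases hall k with rfl | rfl
        · exact absurd rfl hik
        · exact Or.inl (key l l' q hq hq')
      · rcases hall k with rfl | rfl
        · exact Or.inr (Or.inl (key l' l q hq' hq))
        · exact absurd rfl hik

end Build
end MCC

/-! ## Part D: the core lemma -/
namespace MCC
open Set Metric

lemma convex_openRay {F : Type*} [NormedAddCommGroup F] [NormedSpace ℝ F] (y : F) :
    Convex ℝ {w : F | ∃ s : ℝ, 0 < s ∧ w = s • y} := by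
  rintro _ ⟨s, hs, rfl⟩ _ ⟨t, ht, rfl⟩ a b ha hb hab
  refine ⟨a * s + b * t, ?_, by module⟩
  rcases eq_or_lt_of_le ha with rfl | ha
  · have : b = 1 := by linarith
    subst this; simpa using ht
  · have := mul_pos ha hs
    have := mul_nonneg hb ht.le
    linarith

set_option maxHeartbeats 2000000 in
lemma core (m n : ℕ) (hm : 2 ≤ m) {ι : Type*} [Fintype ι] [DecidableEq ι] [Nontrivial ι]
    (y : ι → EuclideanSpace ℝ (Fin (n + 1))) (hy : ∀ i, ‖y i‖ = 1) (hinj : Function.Injective y)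
    (hspan : ∀ i j, i ≠ j → Module.finrank ℝ (Submodule.span ℝ {y i, y j}) + 1 ≤ n)
    (i0 : ι) (hcase : 3 ≤ n ∨ ∃ i1, i1 ≠ i0 ∧ ∀ i, i = i0 ∨ i = i1)
    (Φ : EuclideanSpace ℝ (Fin m) → EuclideanSpace ℝ (Fin (n + 1))) (hΦ : Continuous Φ)
    (hΦ1 : ∀ x, ‖Φ x‖ = 1) (R : ℝ) (hR : 0 < R) (hΦR : ∀ x, R ≤ ‖x‖ → Φ x = y i0) :
    ∃ H : unitInterval × EuclideanSpace ℝ (Fin m) → EuclideanSpace ℝ (Fin (n + 1)),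
      Continuous H ∧ (∀ z, ‖H z‖ = 1) ∧ (∀ x, H (0, x) = Φ x) ∧
      (∀ t x, R + 1 ≤ ‖x‖ → H (t, x) = y i0) ∧
      (∀ x, R ≤ ‖x‖ → H (1, x) = y i0) ∧
      (∀ i x x', H (1, x) = y i → H (1, x') = y i → JoinedIn {z | H (1, z) = y i} x x') := by
  classical
  -- choice of ε
  obtain ⟨ε, hε, hε2, hεj⟩ : ∃ ε : ℝ, 0 < ε ∧ ε ≤ 1 / 2 ∧
      ∀ j, j ≠ i0 → 2 * ε ≤ 1 - inner ℝ (y i0) (y j) := by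
    let δ : ι → ℝ := fun j => if j = i0 then 1 else 1 - inner ℝ (y i0) (y j)
    have hδ : ∀ j, 0 < δ j := by
      intro j
      simp only [δ]
      split_ifs with h
      · exact one_pos
      · have := (inner_lt_one_iff_real_of_norm_eq_one (hy i0) (hy j)).2 (hinj.ne (Ne.symm h))
        linarith
    obtain ⟨j0, hj0⟩ := Finite.exists_min δ
    refine ⟨min (1 / 2) (δ j0 / 2), lt_min (by norm_num) (half_pos (hδ j0)), min_le_left _ _, ?_⟩
    intro j hj
    have h1 := hj0 j
    have h2 : δ j = 1 - inner ℝ (y i0) (y j) := if_neg hj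
    have h3 := min_le_right (1 / 2) (δ j0 / 2)
    linarith
  have e2 : ∀ w : EuclideanSpace ℝ (Fin (n + 1)), ‖w - y i0‖ < ε → ∀ j, j ≠ i0 → ∀ α β : ℝ,
      0 ≤ α → 0 ≤ β → w ≠ α • y j - β • y i0 := by
    intro w hw j hj α β hα hβ h
    have h1 := hεj j hj
    have h2 : inner ℝ (y i0 - w) (y i0 - y j) ≤ ε * 2 := by
      refine (real_inner_le_norm _ _).trans ?_
      have h3 : ‖y i0 - y j‖ ≤ 2 := (norm_sub_le _ _).trans (by rw [hy, hy]; norm_num)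
      rw [norm_sub_rev] at hw
      exact mul_le_mul hw.le h3 (norm_nonneg _) hε.le
    have h4 : inner ℝ (y i0 - w) (y i0 - y j)
        = (1 + α + β) * (1 - inner ℝ (y i0) (y j)) := by
      rw [h]
      simp only [inner_sub_left, inner_sub_right, inner_smul_left, real_inner_self_eq_norm_sq, hy,
        real_inner_comm (y i0) (y j)]
      simp
      ring
    have hc : 0 < 1 - inner ℝ (y i0) (y j) := by linarith
    rw [h4] at h2
    have h5 : 0 ≤ (α + β) * (1 - inner ℝ (y i0) (y j)) := by positivity
    have h6 : α = 0 ∧ β = 0 := by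
      have : (α + β) * (1 - inner ℝ (y i0) (y j)) ≤ 0 := by linarith
      have h7 : α + β ≤ 0 := by
        by_contra hcon
        push Not at hcon
        linarith [mul_pos hcon hc]
      constructor <;> linarith
    rw [h, h6.1, h6.2] at hw
    simp [hy] at hw
    linarith
  obtain ⟨g, hg, ⟨Λ, _, P, A, hP, hcov, hA⟩, hgε⟩ := PA.approx (closedBall 0 (R + 1))
    (isCompact_closedBall _ _) Φ hΦ (ε / 2) (half_pos hε)
  let S : ι × ι → Submodule ℝ (EuclideanSpace ℝ (Fin (n + 1))) :=
    fun ij => Submodule.span ℝ {y ij.1, y ij.2}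
  have hfE : Module.finrank ℝ (EuclideanSpace ℝ (Fin m)) = m := by
    rw [finrank_euclideanSpace, Fintype.card_fin]
  have hfF : Module.finrank ℝ (EuclideanSpace ℝ (Fin (n + 1))) = n + 1 := by
    rw [finrank_euclideanSpace, Fintype.card_fin]
  obtain ⟨v, hv, hgen1, hgen2⟩ := exists_generic' A S (ε / 2) (half_pos hε) (hfE.symm ▸ hm)
  let Z : Λ × {ij : ι × ι // ij.1 ≠ ij.2} → AffineSubspace ℝ (EuclideanSpace ℝ (Fin m)) :=
    fun b => (S b.2.1).toAffineSubspace.comap (A b.1 + AffineMap.const ℝ _ v)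
  have hZmem : ∀ b x, x ∈ Z b ↔ A b.1 x + v ∈ S b.2.1 := fun b x => by
    simp [Z, AffineSubspace.mem_comap]
  have hZ : ∀ b, Module.finrank ℝ (Z b).direction + 2
      ≤ Module.finrank ℝ (EuclideanSpace ℝ (Fin m)) := by
    rintro ⟨l, ⟨i, j⟩, hij⟩
    apply hgen1 l (i, j)
    have := hspan i j hij
    rw [hfF]
    change Module.finrank ℝ (Submodule.span ℝ {y i, y j}) + 2 ≤ n + 1
    omega
  -- the cut-off and the approximation
  let χ : EuclideanSpace ℝ (Fin m) → ℝ := fun x => max 0 (min 1 (R + 1 - ‖x‖))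
  have hχ : Continuous χ := by fun_prop
  have hχ0 : ∀ x, 0 ≤ χ x := fun x => le_max_left _ _
  have hχ1 : ∀ x, χ x ≤ 1 := fun x => max_le zero_le_one (min_le_left _ _)
  have hχR : ∀ x, ‖x‖ ≤ R → χ x = 1 := fun x hx => by
    have : min 1 (R + 1 - ‖x‖) = 1 := min_eq_left (by linarith)
    simp [χ, this]
  have hχR1 : ∀ x, R + 1 ≤ ‖x‖ → χ x = 0 := fun x hx => by
    have : min 1 (R + 1 - ‖x‖) ≤ 0 := (min_le_right _ _).trans (by linarith)
    simp only [χ]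
    exact max_eq_left this
  let ψ : EuclideanSpace ℝ (Fin m) → EuclideanSpace ℝ (Fin (n + 1)) :=
    fun x => Φ x + χ x • (g x + v - Φ x)
  have hψ : Continuous ψ := hΦ.add (hχ.smul ((hg.add continuous_const).sub hΦ))
  have hψε : ∀ x, ‖ψ x - Φ x‖ < ε := by
    intro x
    simp only [ψ, add_sub_cancel_left]
    rcases le_or_gt ‖x‖ (R + 1) with h | h
    · rw [norm_smul, Real.norm_of_nonneg (hχ0 x)]
      have h1 : ‖g x + v - Φ x‖ < ε := by
        have : g x + v - Φ x = (g x - Φ x) + v := by abel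
        rw [this]
        have := norm_add_le (g x - Φ x) v
        have := hgε x (by simpa using h)
        linarith
      calc χ x * ‖g x + v - Φ x‖ ≤ 1 * ‖g x + v - Φ x‖ := by gcongr; exact hχ1 x
        _ < ε := by linarith
    · rw [hχR1 x h.le]; simpa using hε
  have hΦψ : ∀ x, ∀ t ∈ Icc (0:ℝ) 1, Φ x + t • (ψ x - Φ x) ≠ 0 := by
    intro x t ht h
    have h1 : ‖Φ x‖ = ‖t • (ψ x - Φ x)‖ := by
      conv_lhs => rw [eq_neg_of_add_eq_zero_left h, norm_neg]
    rw [hΦ1, norm_smul, Real.norm_of_nonneg ht.1] at h1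
    have := hψε x
    nlinarith [ht.1, ht.2, norm_nonneg (ψ x - Φ x)]
  have hψ0 : ∀ x, ψ x ≠ 0 := fun x => by
    have := hΦψ x 1 (by simp)
    simpa using this
  have hψin : ∀ x, ‖x‖ ≤ R → ψ x = g x + v := fun x hx => by
    simp [ψ, hχR x hx]
  have hψout : ∀ x, R ≤ ‖x‖ → ‖ψ x - y i0‖ < ε := fun x hx => by
    rw [← hΦR x hx]; exact hψε x
  -- pieces
  let C' : ι → Λ → Set (EuclideanSpace ℝ (Fin m)) := fun i l => (P l ∩ closedBall 0 R) ∩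
    (A l + AffineMap.const ℝ (EuclideanSpace ℝ (Fin m)) v) ⁻¹' {w | ∃ s : ℝ, 0 < s ∧ w = s • y i}
  have hC'mem : ∀ i l x, x ∈ C' i l ↔ (x ∈ P l ∧ ‖x‖ ≤ R) ∧ ∃ s : ℝ, 0 < s ∧ A l x + v = s • y i := by
    intro i l x
    simp [C']
  have hC'conv : ∀ i l, Convex ℝ (C' i l) := fun i l =>
    ((hP l).inter (convex_closedBall _ _)).inter ((convex_openRay (y i)).affine_preimage _)
  let γ : ι → Type := fun i => {l : Λ // (C' i l).Nonempty}
  let C : ∀ i, γ i → Set (EuclideanSpace ℝ (Fin m)) := fun i l => C' i l.1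
  let L : ι → Set (EuclideanSpace ℝ (Fin m)) := fun i => {x | ∃ s : ℝ, 0 < s ∧ ψ x = s • y i}
  have hLc : ∀ i, IsClosed (L i) := by
    intro i
    have : L i = {x | ψ x = ‖ψ x‖ • y i} := by
      ext x
      constructor
      · rintro ⟨s, hs, h⟩
        change ψ x = ‖ψ x‖ • y i
        have : ‖ψ x‖ = s := by rw [h, norm_smul, hy, Real.norm_of_nonneg hs.le, mul_one]
        rw [this, h]
      · intro h
        exact ⟨‖ψ x‖, norm_pos_iff.2 (hψ0 x), h⟩
    rw [this]
    exact isClosed_eq hψ (hψ.norm.smul continuous_const)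
  have hCL : ∀ i l, C i l ⊆ L i := by
    intro i l x hx
    obtain ⟨⟨h1, h2⟩, s, hs, h3⟩ := (hC'mem i l.1 x).1 hx
    exact ⟨s, hs, by rw [hψin x h2, hA _ _ h1, h3]⟩
  have hLC : ∀ i, ∀ x ∈ L i, ‖x‖ ≤ R → x ∈ ⋃ l, C i l := by
    rintro i x ⟨s, hs, h⟩ hx
    obtain ⟨l, hl⟩ := hcov x
    have : x ∈ C' i l := (hC'mem i l x).2 ⟨⟨hl, hx⟩, s, hs, by rw [← h, hψin x hx, hA _ _ hl]⟩
    exact mem_iUnion.2 ⟨⟨l, x, this⟩, this⟩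
  have hLout : ∀ i, i ≠ i0 → ∀ x ∈ L i, ‖x‖ < R := by
    rintro i hi x ⟨s, hs, h⟩
    by_contra hx
    exact e2 _ (hψout x (not_lt.1 hx)) i hi s 0 hs.le le_rfl (by simpa using h)
  have hLd : ∀ i k, i ≠ k → Disjoint (L i) (L k) := by
    intro i k hik
    rw [Set.disjoint_left]
    rintro x ⟨s, hs, h⟩ ⟨t, ht, h'⟩
    exact hik (hinj (unit_smul_eq (hy i) (hy k) hs ht.le (h.symm.trans h')))
  let M : ι → Set (EuclideanSpace ℝ (Fin m)) :=
    fun i => if i = i0 then L i ∪ {x | R ≤ ‖x‖} else L i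
  have hMi : ∀ i, i ≠ i0 → M i = L i := fun i hi => if_neg hi
  have hMi0 : M i0 = L i0 ∪ {x | R ≤ ‖x‖} := if_pos rfl
  have hout_c : IsClosed {x : EuclideanSpace ℝ (Fin m) | R ≤ ‖x‖} :=
    isClosed_le continuous_const continuous_norm
  have hLM : ∀ i, L i ⊆ M i := by
    intro i x hx
    by_cases hi : i = i0
    · subst hi; rw [hMi0]; exact Or.inl hx
    · rw [hMi i hi]; exact hx
  have hE : 1 < Module.rank ℝ (EuclideanSpace ℝ (Fin m)) := by
    rw [← Module.finrank_eq_rank, finrank_euclideanSpace, Fintype.card_fin]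
    exact_mod_cast hm
  have hMd0 : ∀ i, i ≠ i0 → Disjoint (M i) (M i0) := by
    intro i hi
    rw [Set.disjoint_left, hMi i hi, hMi0]
    rintro x hx (h | h)
    · exact Set.disjoint_left.1 (hLd i i0 hi) hx h
    · exact absurd (hLout i hi x hx) (not_lt.2 h)
  obtain ⟨K, hKc, hKd, hMK, hKM, hKj⟩ := exists_K hE hR i0 Z hZ γ C (fun i l => hC'conv i l.1)
    (fun i l => l.2) M (by
      intro i hi
      rw [hMi i hi]
      apply Subset.antisymm
      · exact fun x hx => hLC i x hx (hLout i hi x hx).le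
      · exact iUnion_subset fun l => hCL i l)
    (by
      rw [hMi0]
      apply Subset.antisymm
      · rintro x (hx | hx)
        · rcases le_total R ‖x‖ with h | h
          · exact Or.inr h
          · exact Or.inl (hLC i0 x hx h)
        · exact Or.inr hx
      · exact union_subset_union_left _ (iUnion_subset fun l => hCL i0 l))
    (by
      intro i
      by_cases hi : i = i0
      · subst hi; rw [hMi0]; exact (hLc i).union hout_c
      · rw [hMi i hi]; exact hLc i)
    (by
      intro i k hik
      by_cases hi : i = i0
      · subst hi; exact (hMd0 k hik.symm).symm
      · by_cases hk : k = i0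
        · subst hk; exact hMd0 i hi
        · rw [hMi i hi, hMi k hk]; exact hLd i k hik)
    (by
      intro i l x hx
      obtain ⟨j, hj⟩ := exists_ne i
      refine ⟨(l.1, ⟨(i, j), hj.symm⟩), (hZmem _ _).2 ?_⟩
      obtain ⟨-, s, hs, h⟩ := (hC'mem i l.1 x).1 hx
      rw [h]
      exact Submodule.smul_mem _ _ (Submodule.subset_span (by simp)))
    (by
      rcases hcase with h3 | h
      · left
        rintro i ⟨l, x, hx⟩
        rw [hfE]
        obtain ⟨-, s, hs, h⟩ := (hC'mem i l x).1 hx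
        have h' := hgen2 l (i, i) x (by
          rw [h]
          exact Submodule.smul_mem _ _ (Submodule.subset_span (by simp)))
        have : Module.finrank ℝ (S (i, i)) ≤ 1 := by
          simp only [S, Set.pair_eq_singleton]
          exact (finrank_span_le_card _).trans (by simp)
        rw [hfE, hfF] at h'
        omega
      · exact Or.inr h)
  have houtK : ∀ x, R ≤ ‖x‖ → x ∈ K i0 := fun x hx => hMK i0 (by rw [hMi0]; exact Or.inr hx)
  obtain ⟨θ, hθ, hθ0, hθK, hθK1⟩ := cone_final y hy hinj ψ hψ hψ0 K hKc hKd
    (fun x i s hs h => hMK i (hLM i ⟨s, hs, h⟩)) (by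
      intro x i j hx hj α β hα hβ h
      have hLcase : x ∈ L i → False := by
        rintro ⟨s, hs, h'⟩
        have h2 : (s + β) • y i = α • y j := by
          rw [add_smul, ← h', h]; simp
        exact hj (hinj (unit_smul_eq (hy i) (hy j) (by linarith) hα h2)).symm
      rcases hKM i x hx with h1 | ⟨h1, h2⟩
      · by_cases hi : i = i0
        · subst hi
          rw [hMi0] at h1
          rcases h1 with h1 | h1
          · exact hLcase h1
          · exact e2 _ (hψout x h1) j hj α β hα hβ h
        · rw [hMi i hi] at h1
          exact hLcase h1
      · obtain ⟨l, hl⟩ := hcov x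
        apply h2 (l, ⟨(i, j), hj.symm⟩)
        rw [hZmem]
        change A l x + v ∈ _
        rw [← hA _ _ hl, ← hψin x h1.le, h]
        exact Submodule.sub_mem _ (Submodule.smul_mem _ _ (Submodule.subset_span (by simp)))
          (Submodule.smul_mem _ _ (Submodule.subset_span (by simp))))
  let N : unitInterval × EuclideanSpace ℝ (Fin m) → EuclideanSpace ℝ (Fin (n + 1)) := fun z =>
    Φ z.2 + (min 1 (2 * (z.1 : ℝ))) • (ψ z.2 - Φ z.2) + (max 0 (2 * (z.1 : ℝ) - 1)) • θ z.2
  have hN : Continuous N := by fun_prop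
  have hN0 : ∀ z, N z ≠ 0 := by
    rintro ⟨t, x⟩
    have ht0 := t.2.1
    have ht1 := t.2.2
    simp only [N]
    rcases le_total (t : ℝ) (1 / 2) with h | h
    · rw [max_eq_left (by linarith), min_eq_right (by linarith), zero_smul, add_zero]
      exact hΦψ x _ ⟨by linarith, by linarith⟩
    · rw [max_eq_right (by linarith), min_eq_left (by linarith), one_smul, add_sub_cancel]
      exact hθ0 x _ ⟨by linarith, by linarith⟩
  have hN1 : ∀ x, N (1, x) = ψ x + θ x := by
    intro x
    simp only [N, Icc.coe_one]
    norm_num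
  have hH1 : ∀ x i, ‖N (1, x)‖⁻¹ • N (1, x) = y i ↔ x ∈ K i := by
    intro x i
    rw [← hθK]
    have hpos := norm_pos_iff.2 (hN0 (1, x))
    constructor
    · intro h
      refine ⟨‖N (1, x)‖, hpos, ?_⟩
      rw [← h, smul_smul, mul_inv_cancel₀ hpos.ne', one_smul, hN1]
    · rintro ⟨s, hs, h⟩
      rw [hN1, h, norm_smul, hy, Real.norm_of_nonneg hs.le, smul_smul, mul_one,
        inv_mul_cancel₀ hs.ne', one_smul]
  refine ⟨fun z => ‖N z‖⁻¹ • N z, (hN.norm.inv₀ fun z => norm_ne_zero_iff.2 (hN0 z)).smul hN, ?_, ?_,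
    ?_, ?_, ?_⟩
  · intro z
    rw [norm_smul, norm_inv, norm_norm, inv_mul_cancel₀ (norm_ne_zero_iff.2 (hN0 z))]
  · intro x
    have : N (0, x) = Φ x := by simp [N]
    simp [this, hΦ1]
  · intro t x hx
    have h1 : ψ x = y i0 := by
      simp only [ψ]
      rw [hχR1 x hx, hΦR x (by linarith)]; simp
    have h2 : θ x = 0 := by
      have := hθK1 x i0 (houtK x (by linarith))
      rw [h1] at this
      simpa using this
    have : N (t, x) = y i0 := by
      simp only [N]
      rw [h1, h2, hΦR x (by linarith)]; simp
    simp [this, hy]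
  · exact fun x hx => (hH1 x i0).2 (houtK x hx)
  · intro i x x' hx hx'
    have h1 := (hH1 x i).1 hx
    have h2 := (hH1 x' i).1 hx'
    exact (hKj i x h1 x' h2).mono fun z hz => (hH1 z i).2 hz

end MCC

/-! ## Part E: stereographic coordinates and gluing -/
namespace MCC
open Set Metric

/-- Coordinates on the complement of a point of the sphere. -/
structure Ster (m : ℕ) where
  N : Sph m
  σ : EuclideanSpace ℝ (Fin m) → Sph m
  e : Sph m → EuclideanSpace ℝ (Fin m)
  σ_cont : Continuous σ
  e_σ : ∀ x, e (σ x) = x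
  σ_e : ∀ p, p ≠ N → σ (e p) = p
  σ_ne : ∀ x, σ x ≠ N
  e_cont : ContinuousOn e {N}ᶜ

lemma exists_ster (m : ℕ) : Nonempty (Ster m) := by
  have : Fact (Module.finrank ℝ (EuclideanSpace ℝ (Fin (m + 1))) = m + 1) := ⟨by simp⟩
  have hne : (sphere (0 : EuclideanSpace ℝ (Fin (m + 1))) 1).Nonempty :=
    NormedSpace.sphere_nonempty.2 zero_le_one
  obtain ⟨N, hN⟩ := hne
  let N : Sph m := ⟨N, hN⟩
  let e := stereographic' m N
  have hs : e.source = {N}ᶜ := stereographic'_source N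
  have ht : e.target = univ := stereographic'_target N
  refine ⟨⟨N, e.symm, e, ?_, fun x => e.right_inv (by rw [ht]; trivial), fun p hp => ?_, fun x => ?_, ?_⟩⟩
  · have := e.continuousOn_symm
    rw [ht] at this
    exact continuousOn_univ.1 this
  · exact e.left_inv (by rw [hs]; exact hp)
  · have : e.symm x ∈ e.source := e.map_target (by rw [ht]; trivial)
    rw [hs] at this
    exact this
  · rw [← hs]; exact e.continuousOn

namespace Ster
variable {m : ℕ} (c : Ster m)

lemma cases_pt (p : Sph m) : p = c.N ∨ ∃ x, p = c.σ x := by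
  by_cases h : p = c.N
  · exact Or.inl h
  · exact Or.inr ⟨c.e p, (c.σ_e p h).symm⟩

lemma σ_inj : Function.Injective c.σ := fun x y h => by
  rw [← c.e_σ x, h, c.e_σ]

lemma near (U : Set (Sph m)) (hU : IsOpen U) (hN : c.N ∈ U) :
    ∃ R : ℝ, 0 < R ∧ ∀ x, R ≤ ‖x‖ → c.σ x ∈ U := by
  have hc : IsCompact Uᶜ := hU.isClosed_compl.isCompact
  have hc' : IsCompact (c.e '' Uᶜ) :=
    hc.image_of_continuousOn (c.e_cont.mono fun p hp h => hp (by rw [h]; exact hN))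
  obtain ⟨R, hR⟩ := hc'.isBounded.exists_norm_le
  refine ⟨max 1 (R + 1), by positivity, fun x hx => ?_⟩
  by_contra h
  have h1 := hR (c.e (c.σ x)) ⟨_, h, rfl⟩
  rw [c.e_σ] at h1
  have := (le_max_right 1 (R + 1)).trans hx
  linarith

lemma isClosed_B (R : ℝ) : IsClosed (c.σ '' closedBall 0 R) :=
  ((isCompact_closedBall _ _).image c.σ_cont).isClosed

lemma isOpen_O (R : ℝ) : IsOpen (c.σ '' ball 0 R) := by
  have : c.σ '' ball 0 R = {c.N}ᶜ ∩ c.e ⁻¹' ball 0 R := by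
    ext p
    constructor
    · rintro ⟨x, hx, rfl⟩
      exact ⟨c.σ_ne x, by simpa [c.e_σ] using hx⟩
    · rintro ⟨h1, h2⟩
      exact ⟨c.e p, h2, c.σ_e p h1⟩
  rw [this]
  exact c.e_cont.isOpen_inter_preimage isOpen_compl_singleton isOpen_ball

lemma glue {T Y : Type*} [TopologicalSpace T] [TopologicalSpace Y]
    (u : T × EuclideanSpace ℝ (Fin m) → Y) (hu : Continuous u) (w : T × Sph m → Y)
    (R : ℝ) (hw : ContinuousOn w {z | z.2 ∉ c.σ '' ball 0 R})
    (h : ∀ t x, ‖x‖ = R → u (t, x) = w (t, c.σ x)) :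
    ∃ G : T × Sph m → Y, Continuous G ∧ (∀ t x, ‖x‖ ≤ R → G (t, c.σ x) = u (t, x)) ∧
      (∀ t x, R ≤ ‖x‖ → G (t, c.σ x) = w (t, c.σ x)) ∧ ∀ t, G (t, c.N) = w (t, c.N) := by
  classical
  let G : T × Sph m → Y := fun z => if z.2 ∈ c.σ '' closedBall 0 R then u (z.1, c.e z.2) else w z
  have hB : ∀ x, c.σ x ∈ c.σ '' closedBall 0 R ↔ ‖x‖ ≤ R := fun x => by
    rw [c.σ_inj.mem_set_image]; simp
  have hO : ∀ x, c.σ x ∈ c.σ '' ball 0 R ↔ ‖x‖ < R := fun x => by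
    rw [c.σ_inj.mem_set_image]; simp
  have hNB : ∀ s : Set _, c.N ∉ c.σ '' s := by
    rintro s ⟨x, -, hx⟩; exact c.σ_ne x hx
  have hG1 : ∀ t x, ‖x‖ ≤ R → G (t, c.σ x) = u (t, x) := fun t x hx => by
    simp only [G]
    rw [if_pos ((hB x).2 hx), c.e_σ]
  have hG2 : ∀ t x, R ≤ ‖x‖ → G (t, c.σ x) = w (t, c.σ x) := fun t x hx => by
    rcases eq_or_lt_of_le hx with h' | h'
    · rw [hG1 t x h'.ge, h t x h'.symm]
    · simp only [G]
      rw [if_neg]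
      rw [hB]; exact not_le.2 h'
  have hG3 : ∀ t, G (t, c.N) = w (t, c.N) := fun t => if_neg (hNB _)
  refine ⟨G, ?_, hG1, hG2, hG3⟩
  have hc1 : IsClosed {z : T × Sph m | z.2 ∈ c.σ '' closedBall 0 R} :=
    (c.isClosed_B R).preimage continuous_snd
  have hc2 : IsClosed {z : T × Sph m | z.2 ∉ c.σ '' ball 0 R} :=
    (c.isOpen_O R).isClosed_compl.preimage continuous_snd
  have hcov : {z : T × Sph m | z.2 ∈ c.σ '' closedBall 0 R} ∪ {z : T × Sph m | z.2 ∉ c.σ '' ball 0 R}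
      = univ := by
    apply eq_univ_of_forall
    rintro ⟨t, p⟩
    rcases c.cases_pt p with rfl | ⟨x, rfl⟩
    · exact Or.inr (hNB _)
    · rcases lt_or_ge ‖x‖ R with h' | h'
      · exact Or.inl ((hB x).2 h'.le)
      · exact Or.inr fun hh => not_lt.2 h' ((hO x).1 hh)
  rw [← continuousOn_univ, ← hcov]
  refine ContinuousOn.union_of_isClosed ?_ ?_ hc1 hc2
  · have : ContinuousOn (fun z : T × Sph m => u (z.1, c.e z.2))
        {z : T × Sph m | z.2 ∈ c.σ '' closedBall 0 R} := by
      refine hu.comp_continuousOn (continuousOn_fst.prodMk ?_)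
      refine c.e_cont.comp continuousOn_snd ?_
      intro z hz h'
      rw [mem_singleton_iff] at h'
      have hz2 : z.2 ∈ c.σ '' closedBall 0 R := hz
      rw [h'] at hz2
      exact hNB _ hz2
    exact this.congr fun z hz => if_pos hz
  · refine hw.congr ?_
    rintro ⟨t, p⟩ hz
    rcases c.cases_pt p with rfl | ⟨x, rfl⟩
    · exact hG3 t
    · refine hG2 t x ?_
      by_contra h'
      exact hz ((hO x).2 (not_le.1 h'))

/-- A cut-off function on the sphere: `0` inside radius `R`, `1` outside radius `R + 1`. -/
lemma exists_cutoff (R : ℝ) : ∃ μ : Sph m → ℝ, Continuous μ ∧ (∀ p, 0 ≤ μ p ∧ μ p ≤ 1) ∧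
    (∀ x, ‖x‖ ≤ R → μ (c.σ x) = 0) ∧ (∀ x, R + 1 ≤ ‖x‖ → μ (c.σ x) = 1) ∧ μ c.N = 1 := by
  obtain ⟨G, hG, h1, h2, h3⟩ := c.glue (T := Unit) (fun z => max 0 (min 1 (‖z.2‖ - R)))
    (by fun_prop) (fun _ => (1 : ℝ)) (R + 1) continuousOn_const (by
      intro t x hx
      simp [hx])
  have h2' : ∀ x, R + 1 ≤ ‖x‖ → G ((), c.σ x) = 1 := fun x hx => h2 () x hx
  refine ⟨fun p => G ((), p), by fun_prop, fun p => ?_, fun x hx => ?_, h2', h3 ()⟩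
  · rcases c.cases_pt p with rfl | ⟨x, rfl⟩
    · change 0 ≤ G ((), _) ∧ G ((), _) ≤ 1
      rw [h3]; norm_num
    · change 0 ≤ G ((), _) ∧ G ((), _) ≤ 1
      rcases le_total ‖x‖ (R + 1) with h | h
      · rw [h1 _ _ h]
        exact ⟨le_max_left _ _, max_le zero_le_one (min_le_left _ _)⟩
      · rw [h2' _ h]; norm_num
  · change G ((), c.σ x) = 0
    rw [h1 _ _ (by linarith)]
    apply max_eq_left
    exact (min_le_right _ _).trans (by simpa using hx)

end Ster

section Norm
variable {X : Type*} [TopologicalSpace X] {n : ℕ}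

lemma nrm_mem (v : EuclideanSpace ℝ (Fin (n + 1))) (hv : v ≠ 0) :
    ‖v‖⁻¹ • v ∈ sphere (0 : EuclideanSpace ℝ (Fin (n + 1))) 1 := by
  rw [mem_sphere_zero_iff_norm, norm_smul, norm_inv, norm_norm,
      inv_mul_cancel₀ (norm_ne_zero_iff.2 hv)]

/-- Normalisation of a nowhere vanishing map. -/
noncomputable def nrm (g : X → EuclideanSpace ℝ (Fin (n + 1))) (hg : Continuous g)
    (h0 : ∀ x, g x ≠ 0) : C(X, Sph n) where
  toFun := fun x => ⟨‖g x‖⁻¹ • g x, nrm_mem (g x) (h0 x)⟩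
  continuous_toFun :=
    ((hg.norm.inv₀ fun x => norm_ne_zero_iff.2 (h0 x)).smul hg).subtype_mk _

lemma sph_norm (p : Sph n) : ‖(p : EuclideanSpace ℝ (Fin (n + 1)))‖ = 1 := by
  exact mem_sphere_zero_iff_norm.1 p.2

lemma nrm_eq (g : X → EuclideanSpace ℝ (Fin (n + 1))) (hg : Continuous g)
    (h0 : ∀ x, g x ≠ 0) (x : X) (p : Sph n) (h : g x = p) : nrm g hg h0 x = p := by
  apply Subtype.ext
  change ‖g x‖⁻¹ • g x = p
  rw [h, sph_norm]; simp

lemma homotopic_of_ne (u v : C(X, Sph n))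
    (h : ∀ x, (u x : EuclideanSpace ℝ (Fin (n + 1))) ≠ -(v x)) : u.Homotopic v := by
  let g : unitInterval × X → EuclideanSpace ℝ (Fin (n + 1)) :=
    fun z => (1 - (z.1 : ℝ)) • (u z.2 : EuclideanSpace ℝ (Fin (n + 1))) + (z.1 : ℝ) • (v z.2 : EuclideanSpace ℝ (Fin (n + 1)))
  have hg : Continuous g := by fun_prop
  have h0 : ∀ z, g z ≠ 0 := by
    rintro ⟨t, x⟩ hz
    have ht0 := t.2.1
    have ht1 := t.2.2
    have h1 : (1 - (t : ℝ)) • (u x : EuclideanSpace ℝ (Fin (n + 1)))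
        = (t : ℝ) • (-(v x : EuclideanSpace ℝ (Fin (n + 1)))) := by
      rw [smul_neg]; exact eq_neg_of_add_eq_zero_left hz
    rcases eq_or_lt_of_le ht1 with h2 | h2
    · rw [h2] at h1
      simp at h1
      have := sph_norm (v x)
      rw [h1] at this
      simp at this
    · exact h x (unit_smul_eq (sph_norm _) (by rw [norm_neg]; exact sph_norm _) (by linarith) ht0 h1)
  refine ⟨⟨nrm g hg h0, fun x => ?_, fun x => ?_⟩⟩
  · exact nrm_eq g hg h0 (0, x) _ (by simp [g])
  · exact nrm_eq g hg h0 (1, x) _ (by simp [g])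

lemma homotopic_of_fun {Y : Type*} [TopologicalSpace Y] (u v : C(X, Y)) (G : unitInterval × X → Y)
    (hG : Continuous G) (h0 : ∀ x, G (0, x) = u x) (h1 : ∀ x, G (1, x) = v x) : u.Homotopic v :=
  ⟨⟨⟨G, hG⟩, h0, h1⟩⟩

end Norm
end MCC

/-! ## Part F: preparing the pair of maps -/
namespace MCC
open Set Metric
variable {m n : ℕ}

lemma collapse (c : Ster m) (F : C(Sph m, Sph n)) : ∃ R0 : ℝ, 0 < R0 ∧ ∀ R, R0 ≤ R →
    ∃ F' : C(Sph m, Sph n), F.Homotopic F' ∧ (∀ x, R ≤ ‖x‖ → F' (c.σ x) = F c.N) ∧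
      F' c.N = F c.N := by
  let U : Set (Sph m) := {p | 0 < inner ℝ (F p : EuclideanSpace ℝ (Fin (n + 1))) (F c.N)}
  have hU : IsOpen U := isOpen_lt continuous_const (by fun_prop)
  have hNU : c.N ∈ U := by
    change 0 < inner ℝ (F c.N : EuclideanSpace ℝ (Fin (n + 1))) (F c.N)
    rw [real_inner_self_eq_norm_sq, sph_norm]; norm_num
  obtain ⟨R1, hR1, hn⟩ := c.near U hU hNU
  refine ⟨R1 + 1, by linarith, fun R hR => ?_⟩
  obtain ⟨μ, hμ, hμ01, hμ0, hμ1, hμN⟩ := c.exists_cutoff (R - 1)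
  let g : Sph m → EuclideanSpace ℝ (Fin (n + 1)) := fun p =>
    (1 - μ p) • (F p : EuclideanSpace ℝ (Fin (n + 1))) + μ p • (F c.N : EuclideanSpace ℝ (Fin (n + 1)))
  have hg : Continuous g := by fun_prop
  have hpos : ∀ p, 0 < inner ℝ (F p : EuclideanSpace ℝ (Fin (n + 1))) (g p) := by
    intro p
    have h1 : inner ℝ (F p : EuclideanSpace ℝ (Fin (n + 1))) (g p) =
        (1 - μ p) + μ p * inner ℝ (F p : EuclideanSpace ℝ (Fin (n + 1))) (F c.N) := by
      simp only [g]
      rw [inner_add_right, inner_smul_right, inner_smul_right, real_inner_self_eq_norm_sq, sph_norm]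
      ring
    rw [h1]
    have h01 := hμ01 p
    rcases eq_or_lt_of_le h01.1 with h | h
    · rw [← h]; norm_num
    · have hp : p ∈ U := by
        rcases c.cases_pt p with rfl | ⟨x, rfl⟩
        · exact hNU
        · apply hn
          by_contra hx
          rw [hμ0 x (by linarith [not_le.1 hx])] at h
          exact lt_irrefl _ h
      have : 0 < inner ℝ (F p : EuclideanSpace ℝ (Fin (n + 1))) (F c.N) := hp
      have := mul_pos h this
      linarith
  have h0 : ∀ p, g p ≠ 0 := fun p hp => by
    have := hpos p
    rw [hp, inner_zero_right] at this
    exact lt_irrefl _ this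
  have hgN : ∀ p, μ p = 1 → nrm g hg h0 p = F c.N := fun p hp =>
    nrm_eq g hg h0 p _ (by simp [g, hp])
  refine ⟨nrm g hg h0, homotopic_of_ne _ _ fun p hp => ?_, fun x hx => hgN _ (hμ1 _ (by linarith)),
    hgN _ hμN⟩
  have h1 := hpos p
  have h2 : g p = -(‖g p‖ • (F p : EuclideanSpace ℝ (Fin (n + 1)))) := by
    rw [hp]
    change g p = -(‖g p‖ • -(‖g p‖⁻¹ • g p))
    rw [smul_neg, neg_neg, smul_smul, mul_inv_cancel₀ (norm_ne_zero_iff.2 (h0 p)), one_smul]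
  rw [h2, inner_neg_right, inner_smul_right, real_inner_self_eq_norm_sq, sph_norm] at h1
  have := norm_nonneg (g p)
  linarith

lemma sph_joined (hn : 1 ≤ n) (a b : Sph n) : Joined a b := by
  have h := isPathConnected_sphere (E := EuclideanSpace ℝ (Fin (n + 1))) (by
    rw [← Module.finrank_eq_rank]
    simp only [finrank_euclideanSpace, Fintype.card_fin]
    exact_mod_cast (by omega : 1 < n + 1)) 0 (zero_le_one)
  have h' := isPathConnected_iff_pathConnectedSpace.1 h
  exact h'.joined a b

lemma move_value (hn : 1 ≤ n) (c : Ster m) (F : C(Sph m, Sph n)) (R : ℝ) (b d : Sph n)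
    (h1 : ∀ x, R ≤ ‖x‖ → F (c.σ x) = b) (h2 : F c.N = b) :
    ∃ F' : C(Sph m, Sph n), F.Homotopic F' ∧ (∀ x, R + 1 ≤ ‖x‖ → F' (c.σ x) = d) ∧ F' c.N = d := by
  obtain ⟨γ⟩ := sph_joined hn b d
  obtain ⟨μ, hμ, hμ01, hμ0, hμ1, hμN⟩ := c.exists_cutoff R
  obtain ⟨G, hG, g1, g2, g3⟩ := c.glue (T := unitInterval) (fun z => F (c.σ z.2))
    (by have := c.σ_cont; fun_prop) (fun z => γ.extend ((z.1 : ℝ) * μ z.2)) R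
    (by have := γ.continuous_extend; exact (this.comp (by fun_prop)).continuousOn) (by
      intro t x hx
      simp only
      rw [h1 x hx.ge, hμ0 x hx.le, mul_zero, γ.extend_zero])
  refine ⟨⟨fun p => G (1, p), by fun_prop⟩, homotopic_of_fun _ _ G hG (fun p => ?_) (fun p => rfl),
    fun x hx => ?_, ?_⟩
  · rcases c.cases_pt p with rfl | ⟨x, rfl⟩
    · rw [g3, h2]; simp
    · rcases le_total ‖x‖ R with h | h
      · rw [g1 _ _ h]
      · rw [g2 _ _ h, h1 _ h]; simp
  · change G (1, c.σ x) = d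
    rw [g2 _ _ (by linarith)]; simp [hμ1 x hx]
  · change G (1, c.N) = d
    rw [g3]; simp [hμN]

lemma const_inside (c : Ster m) (F : C(Sph m, Sph n)) (ρ : ℝ) (d : Sph n)
    (h1 : ∀ x, ρ + 1 ≤ ‖x‖ → F (c.σ x) = d) (h2 : F c.N = d) :
    ∃ (F' : C(Sph m, Sph n)) (a : Sph n), F.Homotopic F' ∧ (∀ x, ‖x‖ ≤ ρ → F' (c.σ x) = a) ∧
      (∀ x, ρ + 1 ≤ ‖x‖ → F' (c.σ x) = d) ∧ F' c.N = d := by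
  obtain ⟨G, hG, g1, g2, g3⟩ := c.glue (T := unitInterval)
    (fun z => F (c.σ ((1 - (z.1 : ℝ) * max 0 (min 1 (ρ + 1 - ‖z.2‖))) • z.2)))
    (by have := c.σ_cont; fun_prop) (fun z => F z.2) (ρ + 1) (by fun_prop) (by
      intro t x hx
      simp [hx])
  refine ⟨⟨fun p => G (1, p), by fun_prop⟩, F (c.σ 0),
    homotopic_of_fun _ _ G hG (fun p => ?_) (fun p => rfl), fun x hx => ?_, fun x hx => ?_, ?_⟩
  · rcases c.cases_pt p with rfl | ⟨x, rfl⟩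
    · rw [g3]
    · rcases le_total ‖x‖ (ρ + 1) with h | h
      · rw [g1 _ _ h]; simp
      · rw [g2 _ _ h]
  · change G (1, c.σ x) = _
    rw [g1 _ _ (by linarith)]
    have : max 0 (min 1 (ρ + 1 - ‖x‖)) = 1 := by
      rw [min_eq_left (by linarith)]; norm_num
    simp [this]
  · change G (1, c.σ x) = d
    rw [g2 _ _ hx, h1 _ hx]
  · change G (1, c.N) = d
    rw [g3, h2]

lemma copy_outside (c : Ster m) (F1 F2 : C(Sph m, Sph n)) (R ρ : ℝ) (hR : 1 ≤ R) (hρ : 0 ≤ ρ) (d : Sph n)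
    (h1 : ∀ x, R ≤ ‖x‖ → F1 (c.σ x) = d) (h1N : F1 c.N = d)
    (h2 : ∀ x, ρ ≤ ‖x‖ → F2 (c.σ x) = d) (h2N : F2 c.N = d) :
    ∃ F' : C(Sph m, Sph n), F1.Homotopic F' ∧ (∀ x, R + 1 ≤ ‖x‖ → F' (c.σ x) = F2 (c.σ x)) ∧
      F' c.N = F2 c.N := by
  obtain ⟨μ, hμ, hμ01, hμ0, hμ1, hμN⟩ := c.exists_cutoff R
  have hκ : ∀ (t : unitInterval) x, 0 ≤ (1 - (t : ℝ) * μ (c.σ x)) * ρ := by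
    intro t x
    have := mul_le_one₀ t.2.2 (hμ01 (c.σ x)).1 (hμ01 (c.σ x)).2
    exact mul_nonneg (by linarith) hρ
  obtain ⟨W, hW, w1, w2, w3⟩ := c.glue (T := unitInterval)
    (fun z => F2 (c.σ ((1 + (1 - (z.1 : ℝ) * μ (c.σ z.2)) * ρ) • z.2)))
    (by have := c.σ_cont; fun_prop) (fun _ => d) (max ρ (R + 1)) (by fun_prop) (by
      intro t x hx
      apply h2
      have := hκ t x
      rw [norm_smul, Real.norm_of_nonneg (by linarith)]
      have h3 := le_max_left ρ (R + 1)
      rw [← hx] at h3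
      nlinarith [norm_nonneg x])
  have hbig : ∀ x, R ≤ ‖x‖ → F2 (c.σ ((1 + ρ) • x)) = d := by
    intro x hx
    apply h2
    rw [norm_smul, Real.norm_of_nonneg (by linarith)]
    nlinarith
  have w0 : ∀ (t : unitInterval) x, R ≤ ‖x‖ → (t : ℝ) * μ (c.σ x) = 0 → W (t, c.σ x) = d := by
    intro t x hx h0
    rcases le_total ‖x‖ (max ρ (R + 1)) with h | h
    · rw [w1 _ _ h]
      simp only [h0]
      rw [sub_zero, one_mul, hbig x hx]
    · exact w2 _ _ h
  obtain ⟨G, hG, g1, g2, g3⟩ := c.glue (T := unitInterval) (fun z => F1 (c.σ z.2))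
    (by have := c.σ_cont; fun_prop) W R hW.continuousOn (by
      intro t x hx
      rw [w0 t x hx.ge (by rw [hμ0 x hx.le, mul_zero])]
      exact h1 x hx.ge)
  refine ⟨⟨fun p => G (1, p), by fun_prop⟩, homotopic_of_fun _ _ G hG (fun p => ?_) (fun p => rfl),
    fun x hx => ?_, ?_⟩
  · rcases c.cases_pt p with rfl | ⟨x, rfl⟩
    · rw [g3, w3, h1N]
    · rcases le_total ‖x‖ R with h | h
      · rw [g1 _ _ h]
      · rw [g2 _ _ h, h1 _ h, w0 _ _ h (by simp)]
  · change G (1, c.σ x) = _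
    rw [g2 _ _ (by linarith)]
    rcases le_total ‖x‖ (max ρ (R + 1)) with h | h
    · rw [w1 _ _ h]; simp [hμ1 x hx]
    · rw [w2 _ _ h, h2 x ((le_max_left _ _).trans h)]
  · change G (1, c.N) = _
    rw [g3, w3, h2N]

lemma setup (hn : 1 ≤ n) (c : Ster m) (F1 F2 : C(Sph m, Sph n)) :
    ∃ (F1' F2' : C(Sph m, Sph n)) (R : ℝ) (a : Sph n), 0 < R ∧ F1.Homotopic F1' ∧ F2.Homotopic F2' ∧
      (∀ x, ‖x‖ ≤ R + 1 → F2' (c.σ x) = a) ∧ (∀ x, R ≤ ‖x‖ → F1' (c.σ x) = F2' (c.σ x)) ∧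
      F1' c.N = F2' c.N := by
  obtain ⟨R1, hR1, k1⟩ := collapse c F1
  obtain ⟨R2, hR2, k2⟩ := collapse c F2
  let R := max R1 R2
  have hR : 0 < R := lt_max_of_lt_left hR1
  obtain ⟨A1, hA1, a1, a1N⟩ := k1 R (le_max_left _ _)
  obtain ⟨A2, hA2, a2, a2N⟩ := k2 R (le_max_right _ _)
  obtain ⟨B1, hB1, b1, b1N⟩ := move_value hn c A1 R _ (F2 c.N) a1 a1N
  obtain ⟨B2, a, hB2, b2, b2', b2N⟩ := const_inside c A2 (R + 3) (F2 c.N) (fun x hx => a2 x (by linarith)) a2N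
  obtain ⟨D1, hD1, d1, d1N⟩ := copy_outside c B1 B2 (R + 1) (R + 3 + 1) (by linarith) (by linarith) _ b1 b1N
    b2' b2N
  refine ⟨D1, B2, R + 2, a, by linarith, (hA1.trans hB1).trans hD1, hA2.trans hB2,
    fun x hx => b2 x (by linarith), fun x hx => d1 x (by linarith), d1N⟩

end MCC

/-! ## Part G: the optimal pair upstairs -/
namespace MCC
open Set Metric
variable {m n : ℕ}

lemma Ster.ray (c : Ster m) (R : ℝ) (hR : 0 < R) (x : EuclideanSpace ℝ (Fin m)) (hx : R ≤ ‖x‖) :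
    JoinedIn {p | p = c.N ∨ ∃ z, R ≤ ‖z‖ ∧ p = c.σ z} (c.σ x) c.N := by
  classical
  let f : unitInterval → Sph m := fun t => if t = 1 then c.N else c.σ ((1 - (t : ℝ))⁻¹ • x)
  have hlt : ∀ t : unitInterval, t ≠ 1 → (t : ℝ) < 1 := fun t ht =>
    lt_of_le_of_ne t.2.2 fun h => ht (Subtype.ext h)
  have hf : Continuous f := by
    rw [continuous_iff_continuousAt]
    intro t
    by_cases ht : t = 1
    · subst ht
      intro V hV
      have hf1 : f 1 = c.N := if_pos rfl
      rw [hf1] at hV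
      obtain ⟨U, hUV, hU, hNU⟩ := _root_.mem_nhds_iff.1 hV
      obtain ⟨R', hR', hn⟩ := c.near U hU hNU
      have ho : IsOpen {t : unitInterval | R' * (1 - (t : ℝ)) < R} :=
        isOpen_lt (by fun_prop) continuous_const
      have h1 : (1 : unitInterval) ∈ {t : unitInterval | R' * (1 - (t : ℝ)) < R} := by
        change R' * (1 - ((1 : unitInterval) : ℝ)) < R
        simpa using hR
      rw [Filter.mem_map]
      refine Filter.mem_of_superset (ho.mem_nhds h1) fun t ht => ?_
      change f t ∈ V
      apply hUV
      by_cases h : t = 1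
      · rw [h, hf1]; exact hNU
      · have : f t = c.σ ((1 - (t : ℝ))⁻¹ • x) := if_neg h
        rw [this]
        apply hn
        have h2 : 0 < 1 - (t : ℝ) := by linarith [hlt t h]
        rw [norm_smul, Real.norm_of_nonneg (by positivity), inv_mul_eq_div, le_div_iff₀ h2]
        have ht' : R' * (1 - (t : ℝ)) < R := ht
        linarith
    · have : (fun s : unitInterval => c.σ ((1 - (s : ℝ))⁻¹ • x)) =ᶠ[nhds t] f := by
        filter_upwards [isOpen_ne.mem_nhds ht] with s hs
        exact (if_neg hs).symm
      refine ContinuousAt.congr ?_ this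
      refine c.σ_cont.continuousAt.comp ?_
      have h1 : ContinuousAt (fun s : unitInterval => 1 - (s : ℝ)) t := by fun_prop
      have h2 : 1 - (t : ℝ) ≠ 0 := by
        have := hlt t ht
        linarith
      exact (h1.inv₀ h2).smul continuousAt_const
  have hf0 : f 0 = c.σ x := by
    have : f 0 = c.σ ((1 - ((0 : unitInterval) : ℝ))⁻¹ • x) := if_neg (by simp)
    rw [this]; simp
  refine ⟨⟨⟨f, hf⟩, hf0, if_pos rfl⟩, fun t => ?_⟩
  change f t = c.N ∨ ∃ z, R ≤ ‖z‖ ∧ f t = c.σ z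
  by_cases h : t = 1
  · exact Or.inl (if_pos h)
  · refine Or.inr ⟨_, ?_, if_neg h⟩
    have h2 : 0 < 1 - (t : ℝ) := by linarith [hlt t h]
    rw [norm_smul, Real.norm_of_nonneg (by positivity), inv_mul_eq_div, le_div_iff₀ h2]
    have := t.2.1
    nlinarith

/-- The property provided by the core lemma. -/
def HasCore (m n : ℕ) (G : Type) [Group G] [MulAction G (Sph n)] : Prop :=
  ∀ (a : Sph n) (Φ : EuclideanSpace ℝ (Fin m) → Sph n), Continuous Φ → ∀ R : ℝ, 0 < R →
    (∀ x, R ≤ ‖x‖ → Φ x = a) →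
    ∃ H : unitInterval × EuclideanSpace ℝ (Fin m) → Sph n, Continuous H ∧
      (∀ x, H (0, x) = Φ x) ∧ (∀ t x, R + 1 ≤ ‖x‖ → H (t, x) = a) ∧ (∀ x, R ≤ ‖x‖ → H (1, x) = a) ∧
      (∀ (g : G) x x', H (1, x) = g • a → H (1, x') = g • a → JoinedIn {z | H (1, z) = g • a} x x')

lemma optimal (hm : 1 ≤ m) (hn : 1 ≤ n) (G : Type) [Group G] [MulAction G (Sph n)]
    (hfree : ∀ (g : G) (x : Sph n), g • x = x → g = 1) (hcore : HasCore m n G)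
    (F1 F2 : C(Sph m, Sph n)) :
    ∃ F1' F2' : C(Sph m, Sph n), F1.Homotopic F1' ∧ F2.Homotopic F2' ∧
      ∀ (g : G) (p p' : Sph m), F1' p = g • F2' p → F1' p' = g • F2' p' →
        JoinedIn {q | F1' q = g • F2' q} p p' := by
  obtain ⟨c⟩ := exists_ster m
  obtain ⟨A1, A2, R, a, hR, hA1, hA2, a2, a12, a12N⟩ := setup hn c F1 F2
  have hsc : ∀ x : EuclideanSpace ℝ (Fin m), R ≤ ‖x‖ → ‖(R / max R ‖x‖) • x‖ = R := fun x hx => by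
    rw [max_eq_right hx, norm_smul, Real.norm_of_nonneg (by positivity)]
    have : 0 < ‖x‖ := by linarith
    field_simp
  obtain ⟨H, hH, H0, Hout, H1, HJ⟩ := hcore a (fun x => A1 (c.σ ((R / max R ‖x‖) • x)))
    (by
      have := c.σ_cont
      have h : Continuous fun x : EuclideanSpace ℝ (Fin m) => (R / max R ‖x‖) :=
        continuous_const.div (by fun_prop) fun x => (lt_max_of_lt_left hR).ne'
      fun_prop) R hR (fun x hx => by
        have := hsc x hx
        rw [a12 _ this.ge, a2 _ (by linarith)])
  obtain ⟨K, hK, k1, k2, k3⟩ := c.glue H hH (fun z => A1 z.2) (R + 1) (by fun_prop) (by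
    intro t x hx
    rw [Hout t x hx.ge]
    simp only
    rw [a12 x (by linarith), a2 x hx.le])
  let B1 : C(Sph m, Sph n) := ⟨fun p => K (1, p), by fun_prop⟩
  have hB1 : A1.Homotopic B1 := homotopic_of_fun _ _ K hK (fun p => by
    rcases c.cases_pt p with rfl | ⟨x, rfl⟩
    · rw [k3]
    · rcases le_total ‖x‖ (R + 1) with h | h
      · rw [k1 _ _ h, H0]
        rcases le_total ‖x‖ R with h' | h'
        · rw [max_eq_left h', div_self hR.ne', one_smul]
        · have := hsc x h'
          rw [a12 _ this.ge, a2 _ (by linarith), a12 x h', a2 x h]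
      · rw [k2 _ _ h]) (fun p => rfl)
  have b1 : ∀ x, ‖x‖ ≤ R + 1 → B1 (c.σ x) = H (1, x) := fun x hx => k1 1 x hx
  have b2 : ∀ x, R ≤ ‖x‖ → B1 (c.σ x) = A2 (c.σ x) := fun x hx => by
    rcases le_total ‖x‖ (R + 1) with h | h
    · rw [b1 x h, H1 x hx, a2 x h]
    · rw [← a12 x hx]; exact k2 1 x h
  have bN : B1 c.N = A2 c.N := by rw [← a12N]; exact k3 1
  refine ⟨B1, A2, hA1.trans hB1, hA2, fun g => ?_⟩
  by_cases hg : g = 1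
  · subst hg
    simp only [one_smul]
    have : Nonempty (Fin m) := ⟨⟨0, by omega⟩⟩
    obtain ⟨x0, hx0⟩ : ∃ x0 : EuclideanSpace ℝ (Fin m), ‖x0‖ = R := by
      have := NormedSpace.sphere_nonempty (E := EuclideanSpace ℝ (Fin m)) (x := 0) (r := R) |>.2 hR.le
      obtain ⟨x0, h⟩ := this
      exact ⟨x0, by simpa using h⟩
    have hcl : ∀ z, H (1, z) = a → B1 (c.σ z) = A2 (c.σ z) := fun z hz => by
      rcases le_total ‖z‖ R with h | h
      · rw [b1 z (by linarith), hz, a2 z (by linarith)]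
      · exact b2 z h
    have hjN : JoinedIn {q | B1 q = A2 q} (c.σ x0) c.N := by
      refine (c.ray R hR x0 hx0.ge).mono ?_
      rintro p (rfl | ⟨z, hz, rfl⟩)
      · exact bN
      · exact b2 z hz
    have key : ∀ p, B1 p = A2 p → JoinedIn {q | B1 q = A2 q} p c.N := by
      intro p hp
      rcases c.cases_pt p with rfl | ⟨x, rfl⟩
      · exact JoinedIn.refl hp
      · have hx : H (1, x) = a := by
          rcases le_total ‖x‖ R with h | h
          · rw [← b1 x (by linarith), hp, a2 x (by linarith)]
          · exact H1 x h
        have hj := HJ 1 x x0 (by rw [one_smul]; exact hx) (by rw [one_smul]; exact H1 x0 hx0.ge)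
        have hj' := hj.map c.σ_cont
        refine (hj'.mono ?_).trans hjN
        rintro _ ⟨z, hz, rfl⟩
        refine hcl z ?_
        have hz' : H (1, z) = (1 : G) • a := hz
        rwa [one_smul] at hz'
    exact fun p p' hp hp' => (key p hp).trans (key p' hp').symm
  · have key : ∀ p, B1 p = g • A2 p → ∃ x, p = c.σ x ∧ H (1, x) = g • a := by
      intro p hp
      rcases c.cases_pt p with rfl | ⟨x, rfl⟩
      · rw [bN] at hp
        exact absurd (hfree g _ hp.symm) hg
      · refine ⟨x, rfl, ?_⟩
        rcases le_total ‖x‖ R with h | h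
        · rw [← b1 x (by linarith), hp, a2 x (by linarith)]
        · rw [b2 x h] at hp
          exact absurd (hfree g _ hp.symm) hg
    intro p p' hp hp'
    obtain ⟨x, rfl, hx⟩ := key p hp
    obtain ⟨x', rfl, hx'⟩ := key p' hp'
    refine ((HJ g x x' hx hx').map c.σ_cont).mono ?_
    rintro _ ⟨z, hz, rfl⟩
    have hz' : H (1, z) = g • a := hz
    change B1 (c.σ z) = g • A2 (c.σ z)
    rcases le_total ‖z‖ R with h | h
    · rw [b1 z (by linarith), hz', a2 z (by linarith)]
    · rw [H1 z h] at hz'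
      exact absurd (hfree g _ hz'.symm) hg

end MCC

/-! ## Part H: lifting and counting -/
namespace MCC
open Set Metric
variable {m n : ℕ}

section
variable (G : Type) [Group G] [MulAction G (Sph n)]

/-- The orbit projection. -/
abbrev qm : Sph n → Quotient (MulAction.orbitRel G (Sph n)) := Quotient.mk _

lemma qm_eq_iff (x y : Sph n) : qm G x = qm G y ↔ ∃ g : G, x = g • y := by
  have h : qm G x = qm G y ↔ x ∈ MulAction.orbit G y := by
    rw [← MulAction.orbitRel_apply]
    exact Quotient.eq
  rw [h]
  constructor
  · rintro ⟨g, hg⟩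
    exact ⟨g, hg.symm⟩
  · rintro ⟨g, hg⟩
    exact ⟨g, hg.symm⟩

lemma qm_cont : Continuous (qm G (n := n)) := continuous_quotient_mk'

lemma qm_smul (g : G) (x : Sph n) : qm G (g • x) = qm G x := (qm_eq_iff G _ _).2 ⟨g, rfl⟩

variable [Finite G] [ContinuousConstSMul G (Sph n)]

lemma qm_cover (hfree : ∀ (g : G) (x : Sph n), g • x = x → g = 1) : IsCoveringMap (qm G (n := n)) := by
  have : IsCancelSMul G (Sph n) := ⟨fun g h x hx => by
    have : (h⁻¹ * g) • x = x := by rw [mul_smul, hx, inv_smul_smul]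
    have := hfree _ _ this
    exact (inv_mul_eq_one.1 this).symm⟩
  exact (isQuotientCoveringMap_quotientMk_of_properlyDiscontinuousSMul (G := G)
    (E := Sph n)).isCoveringMap

lemma exists_lift (hm : 2 ≤ m) (hfree : ∀ (g : G) (x : Sph n), g • x = x → g = 1)
    (f : C(Sph m, Quotient (MulAction.orbitRel G (Sph n)))) :
    ∃ F : C(Sph m, Sph n), ∀ p, qm G (F p) = f p := by
  have hq := qm_cover G hfree
  obtain ⟨c⟩ := exists_ster m
  obtain ⟨e0, he0⟩ := Quotient.exists_rep (f (c.σ 0))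
  obtain ⟨g, ⟨-, hg⟩, -⟩ := hq.existsUnique_continuousMap_lifts (f.comp ⟨c.σ, c.σ_cont⟩) 0 e0 he0
  have hg' : ∀ x, qm G (g x) = f (c.σ x) := fun x => congrFun hg x
  obtain ⟨eN, heN⟩ := Quotient.exists_rep (f c.N)
  obtain ⟨e, heNs, hqe⟩ := hq.isLocalHomeomorph eN
  have hN : f c.N ∈ e.target := by
    rw [← heN]
    have := e.map_source heNs
    rw [← hqe] at this
    exact this
  have hqs : ∀ z ∈ e.target, qm G (e.symm z) = z := fun z hz => by
    have := e.right_inv hz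
    rwa [← hqe] at this
  obtain ⟨R, hR, hn⟩ := c.near (f ⁻¹' e.target) (e.open_target.preimage f.continuous) hN
  have hrank : 1 < Module.rank ℝ (EuclideanSpace ℝ (Fin m)) := by
    rw [← Module.finrank_eq_rank]
    simp only [finrank_euclideanSpace, Fintype.card_fin]
    exact_mod_cast (by omega : 1 < m)
  have : Nonempty (Fin m) := ⟨⟨0, by omega⟩⟩
  obtain ⟨x0, hx0⟩ : ∃ x0 : EuclideanSpace ℝ (Fin m), ‖x0‖ = R := by
    have := NormedSpace.sphere_nonempty (E := EuclideanSpace ℝ (Fin m)) (x := 0) (r := R) |>.2 hR.le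
    obtain ⟨x0, h⟩ := this
    exact ⟨x0, by simpa using h⟩
  obtain ⟨h, hh⟩ := (qm_eq_iff G (g x0) (e.symm (f (c.σ x0)))).1 (by
    rw [hg', hqs _ (hn x0 hx0.ge)])
  have hpre : IsPreconnected {z : EuclideanSpace ℝ (Fin m) | R ≤ ‖z‖} := by
    have : IsPathConnected {z : EuclideanSpace ℝ (Fin m) | R ≤ ‖z‖} :=
      ⟨x0, hx0.ge, fun {y} hy => joinedIn_outer hrank hR hx0.ge hy⟩
    exact this.isConnected.isPreconnected
  have hsf : ContinuousOn (fun p => h • e.symm (f p)) (f ⁻¹' e.target) := by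
    refine ContinuousOn.const_smul ?_ h
    exact e.continuousOn_symm.comp f.continuous.continuousOn fun p hp => hp
  have heq : EqOn g (fun x => h • e.symm (f (c.σ x))) {z | R ≤ ‖z‖} := by
    refine hq.eqOn_of_comp_eqOn hpre g.continuous.continuousOn
      (hsf.comp c.σ_cont.continuousOn fun x hx => hn x hx) ?_ (a := x0) hx0.ge hh
    intro x hx
    change qm G (g x) = qm G (h • e.symm (f (c.σ x)))
    rw [hg', qm_smul, hqs _ (hn x hx)]
  have hoff : ∀ p, p ∉ c.σ '' ball 0 R → p ∈ f ⁻¹' e.target := by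
    intro p hp
    rcases c.cases_pt p with rfl | ⟨x, rfl⟩
    · exact hN
    · apply hn
      by_contra hx
      exact hp ⟨x, by simpa using hx, rfl⟩
  obtain ⟨K, hK, k1, k2, k3⟩ := c.glue (T := Unit) (fun z => g z.2) (by fun_prop)
    (fun z => h • e.symm (f z.2)) R (hsf.comp continuousOn_snd fun z hz => hoff _ hz)
    (fun t x hx => heq hx.ge)
  refine ⟨⟨fun p => K ((), p), by fun_prop⟩, fun p => ?_⟩
  change qm G (K ((), p)) = f p
  rcases c.cases_pt p with rfl | ⟨x, rfl⟩
  · rw [k3]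
    change qm G (h • e.symm (f c.N)) = _
    rw [qm_smul, hqs _ hN]
  · rcases le_total ‖x‖ R with hx | hx
    · rw [k1 _ _ hx]; exact hg' x
    · rw [k2 _ _ hx]
      change qm G (h • e.symm (f (c.σ x))) = _
      rw [qm_smul, hqs _ (hn x hx)]

lemma homotopic_down (F F' : C(Sph m, Sph n)) (h : F.Homotopic F')
    (f f' : C(Sph m, Quotient (MulAction.orbitRel G (Sph n))))
    (hf : ∀ p, qm G (F p) = f p) (hf' : ∀ p, qm G (F' p) = f' p) : f.Homotopic f' := by
  have h1 : f = (⟨qm G, qm_cont G⟩ : C(_, _)).comp F := by ext p; exact (hf p).symm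
  have h2 : f' = (⟨qm G, qm_cont G⟩ : C(_, _)).comp F' := by ext p; exact (hf' p).symm
  rw [h1, h2]
  exact (ContinuousMap.Homotopic.refl _).comp h

lemma coinc_nonempty [Nontrivial G] (hfree : ∀ (g : G) (x : Sph n), g • x = x → g = 1)
    (F1 F2 : C(Sph m, Sph n)) (f₁ f₂ : C(Sph m, Quotient (MulAction.orbitRel G (Sph n))))
    (h1 : ∀ p, qm G (F1 p) = f₁ p) (h2 : ∀ p, qm G (F2 p) = f₂ p) (h : ¬ f₁.Homotopic f₂) (g : G) :
    ∃ p, F1 p = g • F2 p := by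
  by_contra hne
  push Not at hne
  apply h
  obtain ⟨k, hk⟩ := exists_ne (1 : G)
  let A : C(Sph m, Sph n) := ⟨fun p => -(g • F2 p), (F2.continuous.const_smul g).neg⟩
  let B : C(Sph m, Sph n) := ⟨fun p => k • g • F2 p, (F2.continuous.const_smul g).const_smul k⟩
  have hA : F1.Homotopic A := by
    refine homotopic_of_ne _ _ fun p hp => hne p (Subtype.ext ?_)
    rw [hp]
    change -((-(g • F2 p) : Sph n) : EuclideanSpace ℝ (Fin (n + 1))) = _
    rw [coe_neg_sphere, neg_neg]
  have hB : A.Homotopic B := by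
    refine homotopic_of_ne _ _ fun p hp => ?_
    have h3 : ((-(g • F2 p) : Sph n) : EuclideanSpace ℝ (Fin (n + 1))) = -(k • g • F2 p : Sph n) := hp
    rw [coe_neg_sphere, neg_inj] at h3
    exact hk (hfree k _ (Subtype.ext h3.symm))
  refine homotopic_down G F1 B (hA.trans hB) f₁ f₂ h1 fun p => ?_
  change qm G (k • g • F2 p) = _
  rw [qm_smul, qm_smul, h2]

/-- The element of the group attached to a coincidence point. -/
lemma exists_label (hfree : ∀ (g : G) (x : Sph n), g • x = x → g = 1)
    (F1 F2 : C(Sph m, Sph n)) (f₁ f₂ : C(Sph m, Quotient (MulAction.orbitRel G (Sph n))))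
    (h1 : ∀ p, qm G (F1 p) = f₁ p) (h2 : ∀ p, qm G (F2 p) = f₂ p) :
    ∃ ℓ : {x : Sph m // f₁ x = f₂ x} → G, (∀ x g, ℓ x = g ↔ F1 x.1 = g • F2 x.1) ∧
      ∀ x y, Joined x y → ℓ x = ℓ y := by
  have hex : ∀ x : {x : Sph m // f₁ x = f₂ x}, ∃ g : G, F1 x.1 = g • F2 x.1 := fun x =>
    (qm_eq_iff G _ _).1 (by rw [h1, h2]; exact x.2)
  choose ℓ hℓ using hex
  have hiff : ∀ x g, ℓ x = g ↔ F1 x.1 = g • F2 x.1 := by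
    intro x g
    constructor
    · rintro rfl; exact hℓ x
    · intro h
      rw [hℓ x] at h
      have : (g⁻¹ * ℓ x) • F2 x.1 = F2 x.1 := by rw [mul_smul, h, inv_smul_smul]
      exact (inv_mul_eq_one.1 (hfree _ _ this)).symm
  refine ⟨ℓ, hiff, ?_⟩
  let _ : TopologicalSpace G := ⊥
  have _ : DiscreteTopology G := ⟨rfl⟩
  have hcl : ∀ g : G, IsClosed (ℓ ⁻¹' {g}) := fun g => by
    have : ℓ ⁻¹' {g} = {x | F1 x.1 = g • F2 x.1} := by
      ext x; exact hiff x g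
    rw [this]
    exact isClosed_eq (F1.continuous.comp continuous_subtype_val)
      ((F2.continuous.comp continuous_subtype_val).const_smul g)
  have hcont : Continuous ℓ := by
    rw [continuous_iff_isClosed]
    intro s _
    have : ℓ ⁻¹' s = ⋃ g ∈ s, ℓ ⁻¹' {g} := by ext x; simp
    rw [this]
    exact (Set.toFinite s).isClosed_biUnion fun g _ => hcl g
  rintro x y ⟨γ⟩
  have := PreconnectedSpace.constant (inferInstance : PreconnectedSpace unitInterval)
    (hcont.comp γ.continuous) (x := 0) (y := 1)
  simpa using this

lemma lower [Nontrivial G] (hm : 2 ≤ m) (hfree : ∀ (g : G) (x : Sph n), g • x = x → g = 1)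
    (f₁ f₂ : C(Sph m, Quotient (MulAction.orbitRel G (Sph n)))) (h : ¬ f₁.Homotopic f₂) :
    (Nat.card G : ℕ∞) ≤ ENat.card (ZerothHomotopy {x : Sph m // f₁ x = f₂ x}) := by
  obtain ⟨F1, h1⟩ := exists_lift G hm hfree f₁
  obtain ⟨F2, h2⟩ := exists_lift G hm hfree f₂
  obtain ⟨ℓ, hℓ, hj⟩ := exists_label G hfree F1 F2 f₁ f₂ h1 h2
  have hsurj : ∀ g, ∃ x, ℓ x = g := fun g => by
    obtain ⟨p, hp⟩ := coinc_nonempty G hfree F1 F2 f₁ f₂ h1 h2 h g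
    refine ⟨⟨p, ?_⟩, (hℓ _ _).2 hp⟩
    rw [← h1, ← h2, hp, qm_smul]
  choose s hs using hsurj
  rw [← ENat.card_eq_coe_natCard]
  refine ENat.card_le_card_of_injective (f := fun g => (Quotient.mk _ (s g) : ZerothHomotopy _)) ?_
  intro g g' hgg
  have := hj _ _ (Quotient.exact hgg)
  rwa [hs, hs] at this

lemma upper [Nontrivial G] (hm : 2 ≤ m) (hn : 1 ≤ n)
    (hfree : ∀ (g : G) (x : Sph n), g • x = x → g = 1) (hcore : HasCore m n G)
    (f₁ f₂ : C(Sph m, Quotient (MulAction.orbitRel G (Sph n)))) (h : ¬ f₁.Homotopic f₂) :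
    ∃ f₁' f₂' : C(Sph m, Quotient (MulAction.orbitRel G (Sph n))), f₁.Homotopic f₁' ∧
      f₂.Homotopic f₂' ∧ ENat.card (ZerothHomotopy {x : Sph m // f₁' x = f₂' x}) = (Nat.card G : ℕ∞) := by
  obtain ⟨F1, h1⟩ := exists_lift G hm hfree f₁
  obtain ⟨F2, h2⟩ := exists_lift G hm hfree f₂
  obtain ⟨A1, A2, hA1, hA2, hJ⟩ := optimal (by omega) hn G hfree hcore F1 F2
  let a1 : C(Sph m, Quotient (MulAction.orbitRel G (Sph n))) := (⟨qm G, qm_cont G⟩ : C(_, _)).comp A1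
  let a2 : C(Sph m, Quotient (MulAction.orbitRel G (Sph n))) := (⟨qm G, qm_cont G⟩ : C(_, _)).comp A2
  have k1 : f₁.Homotopic a1 := homotopic_down G F1 A1 hA1 f₁ a1 h1 fun _ => rfl
  have k2 : f₂.Homotopic a2 := homotopic_down G F2 A2 hA2 f₂ a2 h2 fun _ => rfl
  have h' : ¬ a1.Homotopic a2 := fun hh => h ((k1.trans hh).trans k2.symm)
  refine ⟨a1, a2, k1, k2, le_antisymm ?_ (lower G hm hfree a1 a2 h')⟩
  obtain ⟨ℓ, hℓ, hj⟩ := exists_label G hfree A1 A2 a1 a2 (fun _ => rfl) (fun _ => rfl)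
  rw [← ENat.card_eq_coe_natCard]
  refine ENat.card_le_card_of_injective (f := fun z : ZerothHomotopy _ => Quotient.lift ℓ hj z) ?_
  intro z z'
  refine Quotient.inductionOn₂ z z' fun x y hxy => ?_
  have hxy' : ℓ x = ℓ y := hxy
  apply Quotient.sound
  obtain ⟨γ, hγ⟩ := hJ (ℓ x) x.1 y.1 ((hℓ x _).1 rfl) ((hℓ y _).1 hxy'.symm)
  have hmem : ∀ t, a1 (γ t) = a2 (γ t) := fun t => by
    have : A1 (γ t) = ℓ x • A2 (γ t) := hγ t
    change qm G (A1 (γ t)) = qm G (A2 (γ t))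
    rw [this, qm_smul]
  exact ⟨⟨⟨fun t => ⟨γ t, hmem t⟩, γ.continuous.subtype_mk _⟩, Subtype.ext γ.source,
    Subtype.ext γ.target⟩⟩

end
end MCC

/-! ## Part I: the core property for group actions -/
namespace MCC
open Set Metric
variable {m n : ℕ}

lemma exists_antipode (a b : Sph n) (hab : b ≠ a) :
    ∃ Θ : Sph n ≃ₜ Sph n, Θ a = a ∧ Θ b = -a := by
  have hv : ‖(a : EuclideanSpace ℝ (Fin (n + 1)))‖ = 1 := sph_norm a
  let e : OnePoint (ℝ ∙ (a : EuclideanSpace ℝ (Fin (n + 1))))ᗮ ≃ₜ Sph n := onePointHyperplaneHomeoUnitSphere hv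
  have he : e OnePoint.infty = a := rfl
  have he0 : e ((0 : (ℝ ∙ (a : EuclideanSpace ℝ (Fin (n + 1))))ᗮ) : OnePoint _) = -a := by
    apply Subtype.ext
    change (stereoInvFun hv 0 : EuclideanSpace ℝ (Fin (n + 1))) = _
    rw [stereoInvFun_apply, coe_neg_sphere]
    norm_num
    rw [smul_smul]
    norm_num
  have hb : e.symm b ≠ OnePoint.infty := by
    intro h
    apply hab
    rw [← he, ← h, e.apply_symm_apply]
  obtain ⟨y, hy⟩ := OnePoint.ne_infty_iff_exists.1 hb
  let T := (Homeomorph.addRight (-y)).onePointCongr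
  have hT1 : T OnePoint.infty = OnePoint.infty := rfl
  have hT2 : T (y : OnePoint _) = ((0 : (ℝ ∙ (a : EuclideanSpace ℝ (Fin (n + 1))))ᗮ) : OnePoint _) := by
    have : T (y : OnePoint _) = OnePoint.some (y + -y) := rfl
    rw [this, add_neg_cancel]
  refine ⟨(e.symm.trans T).trans e, ?_, ?_⟩
  · change e (T (e.symm a)) = a
    have : e.symm a = OnePoint.infty := (e.symm_apply_eq).2 he.symm
    rw [this, hT1, he]
  · change e (T (e.symm b)) = -a
    rw [← hy, hT2, he0]

lemma core_theta (hm : 2 ≤ m) (G : Type) [Group G] [Finite G] [Nontrivial G] [MulAction G (Sph n)]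
    (hfree : ∀ (g : G) (x : Sph n), g • x = x → g = 1) (a : Sph n) (Θ : Sph n ≃ₜ Sph n)
    (hspan : ∀ g h : G, g ≠ h → Module.finrank ℝ (Submodule.span ℝ
      {(Θ (g • a) : EuclideanSpace ℝ (Fin (n + 1))), (Θ (h • a) : EuclideanSpace ℝ (Fin (n + 1)))}) + 1 ≤ n)
    (hcase : 3 ≤ n ∨ ∃ i1 : G, i1 ≠ 1 ∧ ∀ i : G, i = 1 ∨ i = i1)
    (Φ : EuclideanSpace ℝ (Fin m) → Sph n) (hΦ : Continuous Φ) (R : ℝ) (hR : 0 < R)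
    (hΦR : ∀ x, R ≤ ‖x‖ → Φ x = a) :
    ∃ H : unitInterval × EuclideanSpace ℝ (Fin m) → Sph n, Continuous H ∧
      (∀ x, H (0, x) = Φ x) ∧ (∀ t x, R + 1 ≤ ‖x‖ → H (t, x) = a) ∧ (∀ x, R ≤ ‖x‖ → H (1, x) = a) ∧
      (∀ (g : G) x x', H (1, x) = g • a → H (1, x') = g • a → JoinedIn {z | H (1, z) = g • a} x x') := by
  classical
  have := Fintype.ofFinite G
  obtain ⟨H, hH, H1, H0, Hout, HR, HJ⟩ := core m n hm
    (fun g : G => (Θ (g • a) : EuclideanSpace ℝ (Fin (n + 1)))) (fun g => sph_norm _)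
    (fun g h hgh => by
      have h1 : g • a = h • a := Θ.injective (Subtype.ext hgh)
      have h2 : (h⁻¹ * g) • a = a := by rw [mul_smul, h1, inv_smul_smul]
      exact (inv_mul_eq_one.1 (hfree _ _ h2)).symm)
    hspan 1 hcase (fun x => Θ (Φ x)) (by fun_prop) (fun x => sph_norm _) R hR
    (fun x hx => by simp only [one_smul]; rw [hΦR x hx])
  let K : unitInterval × EuclideanSpace ℝ (Fin m) → Sph n := fun z =>
    Θ.symm ⟨H z, mem_sphere_zero_iff_norm.2 (H1 z)⟩
  have hK : ∀ z (b : Sph n), K z = b ↔ H z = Θ b := by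
    intro z b
    constructor
    · rintro rfl
      simp [K]
    · intro h
      have : (⟨H z, mem_sphere_zero_iff_norm.2 (H1 z)⟩ : Sph n) = Θ b := Subtype.ext h
      simp only [K]
      rw [this, Θ.symm_apply_apply]
  have h1 : Θ a = Θ ((1 : G) • a) := by rw [one_smul]
  refine ⟨K, Θ.symm.continuous.comp (hH.subtype_mk _), fun x => (hK _ _).2 (H0 x),
    fun t x hx => (hK _ _).2 (by rw [h1]; exact Hout t x hx),
    fun x hx => (hK _ _).2 (by rw [h1]; exact HR x hx), fun g x x' hx hx' => ?_⟩
  have := HJ g x x' ((hK _ _).1 hx) ((hK _ _).1 hx')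
  refine this.mono fun z hz => (hK _ _).2 hz

lemma hasCore (hm : 2 ≤ m) (hn : 2 ≤ n) (G : Type) [Group G] [Finite G] [Nontrivial G]
    [MulAction G (Sph n)] (hfree : ∀ (g : G) (x : Sph n), g • x = x → g = 1)
    (hcase : 3 ≤ n ∨ ∃ i1 : G, i1 ≠ 1 ∧ ∀ i : G, i = 1 ∨ i = i1) : HasCore m n G := by
  classical
  intro a Φ hΦ R hR hΦR
  by_cases h3 : 3 ≤ n
  · refine core_theta hm G hfree a (Homeomorph.refl _) (fun g h _ => ?_) hcase Φ hΦ R hR hΦR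
    have hfr := finrank_span_finset_le_card (R := ℝ)
      ({(g • a : Sph n).1, (h • a : Sph n).1} : Finset (EuclideanSpace ℝ (Fin (n + 1))))
    have h2 := Finset.card_le_two (a := (g • a : Sph n).1) (b := (h • a : Sph n).1)
    rw [Finset.coe_pair] at hfr
    have h' := hfr.trans h2
    change Module.finrank ℝ (Submodule.span ℝ {(g • a : Sph n).1, (h • a : Sph n).1}) + 1 ≤ n
    unfold Set.finrank at h'
    omega
  · obtain ⟨k, hk, hall⟩ := hcase.resolve_left h3
    obtain ⟨Θ, hΘ1, hΘ2⟩ := exists_antipode a (k • a) fun h => hk (hfree k a h)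
    refine core_theta hm G hfree a Θ (fun g h _ => ?_) hcase Φ hΦ R hR hΦR
    have hmem : ∀ g : G, (Θ (g • a) : EuclideanSpace ℝ (Fin (n + 1))) ∈
        Submodule.span ℝ {(a : EuclideanSpace ℝ (Fin (n + 1)))} := by
      intro g
      rcases hall g with rfl | rfl
      · rw [one_smul, hΘ1]; exact Submodule.mem_span_singleton_self _
      · rw [hΘ2, coe_neg_sphere]
        exact Submodule.neg_mem _ (Submodule.mem_span_singleton_self _)
    have hle : Submodule.span ℝ
      {(Θ (g • a) : EuclideanSpace ℝ (Fin (n + 1))), (Θ (h • a) : EuclideanSpace ℝ (Fin (n + 1)))} ≤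
        Submodule.span ℝ {(a : EuclideanSpace ℝ (Fin (n + 1)))} := by
      rw [Submodule.span_le]
      rintro _ (rfl | rfl)
      · exact hmem g
      · exact hmem h
    have h4 := Submodule.finrank_mono hle
    have h5 := finrank_span_le_card (R := ℝ) ({(a : EuclideanSpace ℝ (Fin (n + 1)))} : Set _)
    simp at h5
    omega

end MCC

/-! ## Part J: no nowhere vanishing tangent field on the two-sphere -/
namespace MCC
open Set Metric

lemma exists_ster_at {m : ℕ} (N : Sph m) : ∃ c : Ster m, c.N = N := by
  have : Fact (Module.finrank ℝ (EuclideanSpace ℝ (Fin (m + 1))) = m + 1) := ⟨by simp⟩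
  let e := stereographic' m N
  have hs : e.source = {N}ᶜ := stereographic'_source N
  have ht : e.target = univ := stereographic'_target N
  refine ⟨⟨N, e.symm, e, ?_, fun x => e.right_inv (by rw [ht]; trivial), fun p hp => ?_, fun x => ?_, ?_⟩, rfl⟩
  · have := e.continuousOn_symm
    rw [ht] at this
    exact continuousOn_univ.1 this
  · exact e.left_inv (by rw [hs]; exact hp)
  · have : e.symm x ∈ e.source := e.map_target (by rw [ht]; trivial)
    rw [hs] at this
    exact this
  · rw [← hs]; exact e.continuousOn

lemma exists_log_off {m : ℕ} (N : Sph m) (V : Sph m → ℂ) (hV : Continuous V)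
    (h0 : ∀ x, x ≠ N → V x ≠ 0) :
    ∃ L : Sph m → ℂ, ContinuousOn L {N}ᶜ ∧ ∀ x, x ≠ N → Complex.exp (L x) = V x := by
  obtain ⟨c, rfl⟩ := exists_ster_at N
  let f : C(EuclideanSpace ℝ (Fin m), {z : ℂ // z ≠ 0}) :=
    ⟨fun x => ⟨V (c.σ x), h0 _ (c.σ_ne x)⟩, (hV.comp c.σ_cont).subtype_mk _⟩
  obtain ⟨F, ⟨-, hF⟩, -⟩ := Complex.isCoveringMap_exp.existsUnique_continuousMap_lifts f 0
    (Complex.log (V (c.σ 0))) (Subtype.ext (Complex.exp_log (h0 _ (c.σ_ne 0))))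
  refine ⟨fun x => F (c.e x), F.continuous.comp_continuousOn c.e_cont, fun x hx => ?_⟩
  have h1 := congrArg Subtype.val (congrFun hF (c.e x))
  have h2 : Complex.exp (F (c.e x)) = V (c.σ (c.e x)) := h1
  rw [h2, c.σ_e x hx]

lemma no_log_square (M : ℝ → ℂ) (hM : Continuous M)
    (h : ∀ θ : ℝ, Complex.exp (M θ) = Complex.exp (2 * θ * Complex.I)) (hper : M (2 * Real.pi) = M 0) :
    False := by
  have hM0 : Complex.exp (M 0) = 1 := by rw [h 0]; simp
  have hg2 : Continuous fun θ : ℝ => 2 * (θ : ℂ) * Complex.I + M 0 := by fun_prop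
  have h1 := Complex.isCoveringMap_exp.eq_of_comp_eq hM hg2 (by
    ext θ
    change Complex.exp (M θ) = Complex.exp (2 * θ * Complex.I + M 0)
    rw [Complex.exp_add, hM0, mul_one, h]) 0 (by simp)
  have h2 := congrFun h1 (2 * Real.pi)
  rw [hper] at h2
  have h3 := congrArg Complex.im h2
  simp at h3

lemma sph2_sq (x : Sph 2) : (x.1 0) ^ 2 + (x.1 1) ^ 2 + (x.1 2) ^ 2 = 1 := by
  have h := EuclideanSpace.real_norm_sq_eq x.1
  rw [sph_norm, Fin.sum_univ_three] at h
  linarith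

/-- A nowhere vanishing tangent field cannot exist on the two-sphere. -/
lemma hairy (v : Sph 2 → EuclideanSpace ℝ (Fin 3)) (hv : Continuous v)
    (htan : ∀ x : Sph 2, x.1 0 * v x 0 + x.1 1 * v x 1 + x.1 2 * v x 2 = 0)
    (h0 : ∀ x, v x ≠ 0) : False := by
  have hci : ∀ i, Continuous fun x : Sph 2 => v x i := fun i => by fun_prop
  have hxi : ∀ i, Continuous fun x : Sph 2 => x.1 i := fun i => by fun_prop
  have h0' : ∀ x, v x 0 = 0 → v x 1 = 0 → v x 2 = 0 → False := by
    intro x a b c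
    apply h0 x
    ext i
    fin_cases i
    · exact a
    · exact b
    · exact c
  let N : Sph 2 := ⟨EuclideanSpace.single 2 1, by simp⟩
  have hN0 : N.1 0 = 0 := by simp [N]
  have hN1 : N.1 1 = 0 := by simp [N]
  have hN2 : N.1 2 = 1 := by simp [N]
  have hxN : ∀ x : Sph 2, x.1 2 = 1 → x = N := by
    intro x hx
    have h := sph2_sq x
    rw [hx] at h
    have a : x.1 0 = 0 := by nlinarith [sq_nonneg (x.1 0), sq_nonneg (x.1 1)]
    have b : x.1 1 = 0 := by nlinarith [sq_nonneg (x.1 0), sq_nonneg (x.1 1)]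
    apply Subtype.ext
    ext i
    fin_cases i
    · exact a.trans hN0.symm
    · exact b.trans hN1.symm
    · exact hx.trans hN2.symm
  let p : Sph 2 → ℂ := fun x => ⟨v x 0, v x 1⟩
  have hp : Continuous p := by
    have : p = fun x => ((v x 0 : ℝ) : ℂ) + (v x 1 : ℝ) * Complex.I := by
      ext x; exact Complex.mk_eq_add_mul_I _ _
    rw [this]
    exact (Complex.continuous_ofReal.comp (hci 0)).add
      ((Complex.continuous_ofReal.comp (hci 1)).mul continuous_const)
  let ξ : Sph 2 → ℂ := fun x => ⟨x.1 0, x.1 1⟩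
  have hξ : Continuous ξ := by
    have : ξ = fun x => ((x.1 0 : ℝ) : ℂ) + (x.1 1 : ℝ) * Complex.I := by
      ext x; exact Complex.mk_eq_add_mul_I _ _
    rw [this]
    exact (Complex.continuous_ofReal.comp (hxi 0)).add
      ((Complex.continuous_ofReal.comp (hxi 1)).mul continuous_const)
  let V : Sph 2 → ℂ := fun x => p x * ((1 - x.1 2 : ℝ) : ℂ) + ξ x * ((v x 2 : ℝ) : ℂ)
  have hV : Continuous V := by
    have h1 : Continuous fun x : Sph 2 => ((1 - x.1 2 : ℝ) : ℂ) :=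
      Complex.continuous_ofReal.comp (continuous_const.sub (hxi 2))
    have h2 : Continuous fun x : Sph 2 => ((v x 2 : ℝ) : ℂ) := Complex.continuous_ofReal.comp (hci 2)
    exact (hp.mul h1).add (hξ.mul h2)
  have hV0 : ∀ x, x ≠ N → V x ≠ 0 := by
    intro x hx hVx
    have hr := congrArg Complex.re hVx
    have hi := congrArg Complex.im hVx
    simp [V, p, ξ] at hr hi
    have ht : x.1 2 ≠ 1 := fun h => hx (hxN x h)
    have ht' : 1 - x.1 2 ≠ 0 := fun h => ht (by linarith)
    have hs := sph2_sq x
    have h2 := htan x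
    have hq : (1 - x.1 2) * v x 2 = 0 := by
      linear_combination x.1 0 * hr + x.1 1 * hi - (1 - x.1 2) * h2 - v x 2 * hs
    have hq0 : v x 2 = 0 := (mul_eq_zero.1 hq).resolve_left ht'
    rw [hq0] at hr hi
    refine h0' x ?_ ?_ hq0
    · have : v x 0 * (1 - x.1 2) = 0 := by linarith
      exact (mul_eq_zero.1 this).resolve_right ht'
    · have : v x 1 * (1 - x.1 2) = 0 := by linarith
      exact (mul_eq_zero.1 this).resolve_right ht'
  obtain ⟨L, hL, hLV⟩ := exists_log_off N V hV hV0
  have hpN : p N ≠ 0 := by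
    intro h
    have hr := congrArg Complex.re h
    have hi := congrArg Complex.im h
    refine h0' N hr hi ?_
    have := htan N
    rw [hN0, hN1, hN2] at this
    linarith
  -- the region near the pole
  let U : Set (Sph 2) := {x | 0 < x.1 2 ∧
    ‖p x‖ * ‖p N‖ * (1 - x.1 2) < (1 + x.1 2) * (starRingEnd ℂ (p x) * p N).re}
  have hU : IsOpen U := by
    refine IsOpen.and (isOpen_lt continuous_const (hxi 2)) (isOpen_lt ?_ ?_)
    · exact (hp.norm.mul continuous_const).mul (continuous_const.sub (hxi 2))
    · exact (continuous_const.add (hxi 2)).mul (Complex.continuous_re.comp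
        ((Complex.continuous_conj.comp hp).mul continuous_const))
  have hNU : N ∈ U := by
    refine ⟨by rw [hN2]; norm_num, ?_⟩
    rw [hN2, mul_comm (starRingEnd ℂ (p N)), Complex.mul_conj, Complex.ofReal_re]
    have := Complex.normSq_pos.2 hpN
    linarith
  obtain ⟨ε, hε, hball⟩ := Metric.isOpen_iff.1 hU N hNU
  -- a circle near the pole
  obtain ⟨t, s, ht0, ht1, hst, htε⟩ : ∃ t s : ℝ, 0 < t ∧ t < 1 ∧ s ^ 2 = 1 - t ^ 2 ∧ 2 - 2 * t < ε ^ 2 := by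
    let t : ℝ := max (1 / 2) (1 - ε ^ 2 / 4)
    have h1 : (1 / 2 : ℝ) ≤ t := le_max_left _ _
    have h2 : 1 - ε ^ 2 / 4 ≤ t := le_max_right _ _
    have hε2 : 0 < ε ^ 2 := by positivity
    have h3 : t < 1 := max_lt (by norm_num) (by linarith)
    exact ⟨t, Real.sqrt (1 - t ^ 2), by linarith, h3, Real.sq_sqrt (by nlinarith), by linarith⟩
  have hmem : ∀ θ : ℝ, (!₂[s * Real.cos θ, s * Real.sin θ, t] : EuclideanSpace ℝ (Fin 3)) ∈
      sphere (0 : EuclideanSpace ℝ (Fin 3)) 1 := by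
    intro θ
    rw [mem_sphere_zero_iff_norm, EuclideanSpace.norm_eq, Fin.sum_univ_three, Real.sqrt_eq_one]
    simp only [Real.norm_eq_abs, sq_abs]
    change (s * Real.cos θ) ^ 2 + (s * Real.sin θ) ^ 2 + t ^ 2 = 1
    linear_combination hst + s ^ 2 * Real.sin_sq_add_cos_sq θ
  let x : ℝ → Sph 2 := fun θ => ⟨!₂[s * Real.cos θ, s * Real.sin θ, t], hmem θ⟩
  have hx0 : ∀ θ, (x θ).1 0 = s * Real.cos θ := fun θ => rfl
  have hx1 : ∀ θ, (x θ).1 1 = s * Real.sin θ := fun θ => rfl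
  have hx2 : ∀ θ, (x θ).1 2 = t := fun θ => rfl
  have hxc : Continuous x := by
    refine Continuous.subtype_mk ?_ _
    refine (PiLp.continuous_toLp 2 _).comp ?_
    refine continuous_pi fun i => ?_
    fin_cases i
    · exact continuous_const.mul Real.continuous_cos
    · exact continuous_const.mul Real.continuous_sin
    · exact continuous_const
  have hxne : ∀ θ, x θ ≠ N := fun θ h => by
    have : (x θ).1 2 = 1 := by rw [h, hN2]
    rw [hx2] at this
    linarith
  have hxU : ∀ θ, x θ ∈ U := by
    intro θ
    apply hball
    rw [mem_ball, Subtype.dist_eq, EuclideanSpace.dist_eq, Real.sqrt_lt' hε, Fin.sum_univ_three]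
    rw [hx0, hx1, hx2, hN0, hN1, hN2, Real.dist_eq, Real.dist_eq, Real.dist_eq, sq_abs, sq_abs, sq_abs]
    nlinarith [Real.sin_sq_add_cos_sq θ]
  have hxper : x (2 * Real.pi) = x 0 := by
    apply Subtype.ext
    change !₂[s * Real.cos (2 * Real.pi), s * Real.sin (2 * Real.pi), t] =
      !₂[s * Real.cos 0, s * Real.sin 0, t]
    simp
  let w : ℝ → ℂ := fun θ => Complex.exp (θ * Complex.I)
  have hwre : ∀ θ, (w θ).re = Real.cos θ := fun θ => Complex.exp_ofReal_mul_I_re θ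
  have hwim : ∀ θ, (w θ).im = Real.sin θ := fun θ => Complex.exp_ofReal_mul_I_im θ
  have hw1 : ∀ θ, w θ * starRingEnd ℂ (w θ) = 1 := fun θ => by
    rw [Complex.mul_conj, Complex.normSq_apply, hwre, hwim]
    norm_cast
    nlinarith [Real.sin_sq_add_cos_sq θ]
  have hwn : ∀ θ, ‖w θ‖ = 1 := fun θ => Complex.norm_exp_ofReal_mul_I θ
  have hwc : Continuous w := by fun_prop
  let Q : ℝ → ℂ := fun θ => -(V (x θ)) * p N * (starRingEnd ℂ (w θ)) ^ 2
  have hQc : Continuous Q :=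
    (((hV.comp hxc).neg).mul continuous_const).mul ((Complex.continuous_conj.comp hwc).pow 2)
  have hQre : ∀ θ, 0 < (Q θ).re := by
    intro θ
    have hid : (2 * t : ℂ) * Q θ = ((1 - t : ℝ) : ℂ) * (((1 - t : ℝ) : ℂ) * (p (x θ) * p N *
        (starRingEnd ℂ (w θ)) ^ 2) + ((1 + t : ℝ) : ℂ) * (starRingEnd ℂ (p (x θ)) * p N)) := by
      have hξw : ξ (x θ) = (s : ℂ) * w θ := by
        apply Complex.ext
        · simp [ξ, hx0, hwre]
        · simp [ξ, hx1, hwim]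
      have htq : (t : ℂ) * (v (x θ) 2 : ℝ) * 2 =
          -(s : ℂ) * (p (x θ) * starRingEnd ℂ (w θ) + starRingEnd ℂ (p (x θ)) * w θ) := by
        have h1 := htan (x θ)
        rw [hx0, hx1, hx2] at h1
        apply Complex.ext
        · simp [p, hwre, hwim]
          linear_combination 2 * h1
        · simp [p, hwre, hwim]
          right
          ring
      have hst' : (s : ℂ) ^ 2 = 1 - (t : ℂ) ^ 2 := by exact_mod_cast hst
      simp only [Q, V]
      rw [hξw, hx2]
      push_cast
      have hw := hw1 θ
      linear_combination (-(s : ℂ) * w θ * p N * (starRingEnd ℂ (w θ)) ^ 2) * htq +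
        (w θ * (starRingEnd ℂ (w θ)) ^ 2 * p N * (p (x θ) * starRingEnd ℂ (w θ) +
          starRingEnd ℂ (p (x θ)) * w θ)) * hst' +
        (1 - (t : ℂ) ^ 2) * p N * (p (x θ) * (starRingEnd ℂ (w θ)) ^ 2 +
          starRingEnd ℂ (p (x θ)) * (w θ * starRingEnd ℂ (w θ) + 1)) * hw
    have h1 := congrArg Complex.re hid
    have h2 : ((2 * t : ℂ) * Q θ).re = 2 * t * (Q θ).re := by
      have : (2 * t : ℂ) = ((2 * t : ℝ) : ℂ) := by push_cast; rfl
      rw [this, Complex.re_ofReal_mul]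
    rw [h2, Complex.re_ofReal_mul, Complex.add_re, Complex.re_ofReal_mul, Complex.re_ofReal_mul] at h1
    have h3 : |(p (x θ) * p N * (starRingEnd ℂ (w θ)) ^ 2).re| ≤ ‖p (x θ)‖ * ‖p N‖ := by
      refine (Complex.abs_re_le_norm _).trans ?_
      rw [norm_mul, norm_mul, norm_pow, RCLike.norm_conj, hwn]
      simp
    have h4 := (hxU θ).2
    rw [hx2] at h4
    have h5 := (abs_le.1 h3).1
    have h6 : 0 < (1 - t) * (p (x θ) * p N * (starRingEnd ℂ (w θ)) ^ 2).re +
        (1 + t) * (starRingEnd ℂ (p (x θ)) * p N).re := by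
      have : (1 - t) * (-(‖p (x θ)‖ * ‖p N‖)) ≤
        (1 - t) * (p (x θ) * p N * (starRingEnd ℂ (w θ)) ^ 2).re :=
        mul_le_mul_of_nonneg_left h5 (by linarith)
      linarith
    have h7 : 0 < 2 * t * (Q θ).re := by rw [h1]; exact mul_pos (by linarith) h6
    exact (pos_iff_pos_of_mul_pos h7).1 (by linarith)
  obtain ⟨k, hk⟩ : ∃ k, Complex.exp k = -(p N) := ⟨Complex.log (-(p N)), Complex.exp_log (neg_ne_zero.2 hpN)⟩
  refine no_log_square (fun θ => L (x θ) + k - Complex.log (Q θ)) ?_ ?_ ?_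
  · refine ((hL.comp_continuous hxc fun θ => hxne θ).add continuous_const).sub ?_
    exact hQc.clog fun θ => Or.inl (hQre θ)
  · intro θ
    have hQ0 : Q θ ≠ 0 := fun h => by
      have := hQre θ
      rw [h] at this
      simp at this
    rw [Complex.exp_sub, Complex.exp_add, hLV _ (hxne θ), hk, Complex.exp_log hQ0, div_eq_iff hQ0]
    have hw2 : Complex.exp (2 * θ * Complex.I) = w θ ^ 2 := by
      simp only [w]
      rw [← Complex.exp_nat_mul]; congr 1; push_cast; ring
    rw [hw2]
    have := hw1 θ
    simp only [Q]
    linear_combination (V (x θ) * p N * (w θ * starRingEnd ℂ (w θ) + 1)) * this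
  · have hQper : Q (2 * Real.pi) = Q 0 := by
      simp only [Q, w]
      rw [hxper]
      push_cast
      rw [Complex.exp_two_pi_mul_I]; simp
    rw [hxper, hQper]

end MCC

/-! ## Part K: conclusion -/
namespace MCC
open Set Metric

lemma inner_lt {n : ℕ} (x y : Sph n) (h : y ≠ x) : inner ℝ (x : EuclideanSpace ℝ (Fin (n + 1))) y < 1 := by
  rw [inner_lt_one_iff_real_of_norm_eq_one (sph_norm x) (sph_norm y)]
  exact fun hh => h (Subtype.ext hh.symm)

lemma inv_inj {n : ℕ} (x y z : Sph n) (hy : y ≠ x) (hz : z ≠ x)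
    (h : (1 - inner ℝ (x : EuclideanSpace ℝ (Fin (n + 1))) y)⁻¹ • ((y : EuclideanSpace ℝ (Fin (n + 1))) - x) =
      (1 - inner ℝ (x : EuclideanSpace ℝ (Fin (n + 1))) z)⁻¹ • ((z : EuclideanSpace ℝ (Fin (n + 1))) - x)) :
    y = z := by
  have key : ∀ y : Sph n, y ≠ x → ‖(1 - inner ℝ (x : EuclideanSpace ℝ (Fin (n + 1))) y)⁻¹ •
      ((y : EuclideanSpace ℝ (Fin (n + 1))) - x)‖ ^ 2 =
      2 * (1 - inner ℝ (x : EuclideanSpace ℝ (Fin (n + 1))) y)⁻¹ := by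
    intro y hy
    have h1 := inner_lt x y hy
    rw [norm_smul, mul_pow, norm_sub_sq_real, sph_norm, sph_norm, Real.norm_eq_abs, sq_abs]
    have hc : inner ℝ (y : EuclideanSpace ℝ (Fin (n + 1))) x =
      inner ℝ (x : EuclideanSpace ℝ (Fin (n + 1))) y := real_inner_comm _ _
    rw [hc]
    have : 1 - inner ℝ (x : EuclideanSpace ℝ (Fin (n + 1))) y ≠ 0 := by linarith
    field_simp
    ring
  have h1 := key y hy
  rw [h, key z hz] at h1
  have h2 : (1 - inner ℝ (x : EuclideanSpace ℝ (Fin (n + 1))) y)⁻¹ =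
    (1 - inner ℝ (x : EuclideanSpace ℝ (Fin (n + 1))) z)⁻¹ := by linarith
  rw [h2] at h
  have h3 : (1 - inner ℝ (x : EuclideanSpace ℝ (Fin (n + 1))) z)⁻¹ ≠ 0 :=
    inv_ne_zero (by linarith [inner_lt x z hz])
  have h4 := smul_right_injective _ h3 h
  exact Subtype.ext (sub_left_injective h4)

lemma no_three (G : Type) [Group G] [MulAction G (Sph 2)] [ContinuousConstSMul G (Sph 2)]
    (hfree : ∀ (g : G) (x : Sph 2), g • x = x → g = 1) (g h : G) (hg : g ≠ 1) (hh : h ≠ 1) : g = h := by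
  by_contra hne
  have hcg : ∀ g : G, Continuous fun x : Sph 2 => ((g • x : Sph 2) : EuclideanSpace ℝ (Fin 3)) := fun g =>
    continuous_subtype_val.comp (continuous_const_smul g)
  have hu : ∀ g : G, g ≠ 1 → Continuous fun x : Sph 2 =>
      (1 - inner ℝ (x : EuclideanSpace ℝ (Fin 3)) (g • x : Sph 2))⁻¹ •
        (((g • x : Sph 2) : EuclideanSpace ℝ (Fin 3)) - x) := by
    intro g hg
    have h1 : Continuous fun x : Sph 2 =>
        1 - inner ℝ (x : EuclideanSpace ℝ (Fin 3)) (g • x : Sph 2) :=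
      continuous_const.sub (continuous_subtype_val.inner (hcg g))
    refine (h1.inv₀ fun x => ?_).smul ((hcg g).sub continuous_subtype_val)
    have := inner_lt x (g • x) fun hx => hg (hfree g x hx)
    linarith
  have hin : ∀ g : G, g ≠ 1 → ∀ x : Sph 2, inner ℝ (x : EuclideanSpace ℝ (Fin 3))
      ((1 - inner ℝ (x : EuclideanSpace ℝ (Fin 3)) (g • x : Sph 2))⁻¹ •
        (((g • x : Sph 2) : EuclideanSpace ℝ (Fin 3)) - x)) = -1 := by
    intro g hg x
    have := inner_lt x (g • x) fun hx => hg (hfree g x hx)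
    rw [inner_smul_right, inner_sub_right, real_inner_self_eq_norm_sq, sph_norm]
    have : 1 - inner ℝ (x : EuclideanSpace ℝ (Fin 3)) (g • x : Sph 2) ≠ 0 := by linarith
    field_simp
    ring
  refine hairy _ ((hu g hg).sub (hu h hh)) (fun x => ?_) (fun x hx => ?_)
  · have h1 : inner ℝ (x : EuclideanSpace ℝ (Fin 3))
      ((1 - inner ℝ (x : EuclideanSpace ℝ (Fin 3)) (g • x : Sph 2))⁻¹ •
        (((g • x : Sph 2) : EuclideanSpace ℝ (Fin 3)) - x) -
      (1 - inner ℝ (x : EuclideanSpace ℝ (Fin 3)) (h • x : Sph 2))⁻¹ •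
        (((h • x : Sph 2) : EuclideanSpace ℝ (Fin 3)) - x)) = 0 := by
      rw [inner_sub_right, hin g hg, hin h hh]; norm_num
    rw [PiLp.inner_apply, Fin.sum_univ_three] at h1
    simp only [RCLike.inner_apply, conj_trivial] at h1
    simp only [Pi.sub_apply, PiLp.sub_apply] at h1 ⊢
    linarith
  · have := inv_inj x (g • x) (h • x) (fun hx => hg (hfree g x hx)) (fun hx => hh (hfree h x hx))
      (sub_eq_zero.1 hx)
    have h2 : (h⁻¹ * g) • x = x := by rw [mul_smul, this, inv_smul_smul]
    exact hne (inv_mul_eq_one.1 (hfree _ _ h2)).symm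

end MCC

theorem stmt11 (m n : ℕ) (hm : 2 ≤ m) (hn : 2 ≤ n)
    (G : Type) [Group G] [Finite G] [Nontrivial G] [MulAction G (Sph n)]
    -- the action is by diffeomorphisms:
    (hsmooth : ∀ g : G, ContMDiff (𝓡 n) (𝓡 n) (⊤ : ℕ∞) fun x : Sph n => g • x)
    -- the action is free:
    (hfree : ∀ (g : G) (x : Sph n), g • x = x → g = 1)
    (f₁ f₂ : C(Sph m, Quotient (MulAction.orbitRel G (Sph n))))
    (h : ¬ f₁.Homotopic f₂) :
    (∃ f₁' f₂' : C(Sph m, Quotient (MulAction.orbitRel G (Sph n))),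
      f₁.Homotopic f₁' ∧ f₂.Homotopic f₂' ∧
      ENat.card (ZerothHomotopy {x : Sph m // f₁' x = f₂' x}) = (Nat.card G : ℕ∞)) ∧
    (∀ f₁' f₂' : C(Sph m, Quotient (MulAction.orbitRel G (Sph n))),
      f₁.Homotopic f₁' → f₂.Homotopic f₂' →
      (Nat.card G : ℕ∞) ≤ ENat.card (ZerothHomotopy {x : Sph m // f₁' x = f₂' x})) := by
  have hcs : ContinuousConstSMul G (Sph n) := ⟨fun g => (hsmooth g).continuous⟩
  have hcase : 3 ≤ n ∨ ∃ i1 : G, i1 ≠ 1 ∧ ∀ i : G, i = 1 ∨ i = i1 := by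
    by_cases h3 : 3 ≤ n
    · exact Or.inl h3
    · obtain rfl : n = 2 := by omega
      obtain ⟨k, hk⟩ := exists_ne (1 : G)
      refine Or.inr ⟨k, hk, fun i => ?_⟩
      by_cases hi : i = 1
      · exact Or.inl hi
      · exact Or.inr (MCC.no_three G hfree i k hi hk)
  exact ⟨MCC.upper G hm (by omega) hfree (MCC.hasCore hm hn G hfree hcase) f₁ f₂ h,
    fun f₁' f₂' h1 h2 => MCC.lower G hm hfree f₁' f₂' fun hh => h ((h1.trans hh).trans h2.symm)⟩
end

section
/- Let X, Y be topological spaces and let f₁, f₁', f₂, f₂' : X → Y be continuous maps with f₁ homotopic to f₁' and f₂ homotopic to f₂'. Then there is a bijection between the set of path components of the homotopy coincidence space E(f₁,f₂) and the set of path components of E(f₁',f₂'). In particular the Reidemeister number #π₀(E(f₁,f₂)) depends only on the homotopy classes of f₁ and f₂. -/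
/-- The homotopy coincidence space `E(f₁,f₂)`. -/
abbrev HCS {X Y : Type} [TopologicalSpace X] [TopologicalSpace Y]
    (f₁ f₂ : C(X, Y)) : Type :=
  {p : X × C(unitInterval, Y) // p.2 0 = f₁ p.1 ∧ p.2 1 = f₂ p.1}

namespace HCSAux

variable {X Y : Type} [TopologicalSpace X] [TopologicalSpace Y] {f₁ f₁' f₂ f₂' : C(X, Y)}

/-- The path underlying a point of the homotopy coincidence space. -/
def toPath (p : HCS f₁ f₂) : Path (f₁ p.1.1) (f₂ p.1.1) := ⟨p.1.2, p.2.1, p.2.2⟩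

/-- A point of the homotopy coincidence space from a path. -/
def ofPath (x : X) (γ : Path (f₁ x) (f₂ x)) : HCS f₁ f₂ :=
  ⟨(x, γ.toContinuousMap), γ.source, γ.target⟩

/-- Homotopic paths give joined points. -/
theorem joined_ofPath (x : X) {γ γ' : Path (f₁ x) (f₂ x)} (h : γ.Homotopic γ') :
    Joined (ofPath x γ : HCS f₁ f₂) (ofPath x γ') := by
  obtain ⟨F⟩ := h
  refine ⟨⟨⟨fun t => ofPath x (F.eval t), ?_⟩, ?_, ?_⟩⟩
  · refine Continuous.subtype_mk (continuous_const.prodMk ?_) _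
    refine ContinuousMap.continuous_of_continuous_uncurry _ ?_
    exact F.continuous
  · simp
  · simp

/-- Conjugating by families of paths. -/
noncomputable def conj (a : ∀ x, Path (f₁' x) (f₁ x)) (b : ∀ x, Path (f₂ x) (f₂' x)) (p : HCS f₁ f₂) :
    HCS f₁' f₂' :=
  ofPath p.1.1 ((a p.1.1).trans ((toPath p).trans (b p.1.1)))

theorem continuous_conj (a : ∀ x, Path (f₁' x) (f₁ x)) (b : ∀ x, Path (f₂ x) (f₂' x))
    (ha : Continuous ↿a) (hb : Continuous ↿b) :
    Continuous (conj a b : HCS f₁ f₂ → HCS f₁' f₂') := by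
  refine Continuous.subtype_mk (Continuous.prodMk (by fun_prop) ?_) _
  refine ContinuousMap.continuous_of_continuous_uncurry _ ?_
  have hx : Continuous (fun q : HCS f₁ f₂ × unitInterval => (q.1.1.1, q.2)) := by fun_prop
  refine Path.trans_continuous_family (fun p : HCS f₁ f₂ => a p.1.1) (ha.comp hx)
    (fun p : HCS f₁ f₂ => (toPath p).trans (b p.1.1)) ?_
  refine Path.trans_continuous_family (fun p : HCS f₁ f₂ => toPath p) ?_
    (fun p : HCS f₁ f₂ => b p.1.1) (hb.comp hx)
  change Continuous (fun q : HCS f₁ f₂ × unitInterval => q.1.1.2 q.2)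
  fun_prop

theorem joined_conj_conj (a : ∀ x, Path (f₁' x) (f₁ x)) (b : ∀ x, Path (f₂ x) (f₂' x))
    (p : HCS f₁ f₂) :
    Joined (conj (fun x => (a x).symm) (fun x => (b x).symm) (conj a b p)) p := by
  refine joined_ofPath p.1.1 (γ' := toPath p) ?_
  change ((a p.1.1).symm.trans (((a p.1.1).trans ((toPath p).trans (b p.1.1))).trans
    (b p.1.1).symm)).Homotopic (toPath p)
  rw [← Path.Homotopic.Quotient.eq]
  simp only [Path.Homotopic.Quotient.mk_trans, Path.Homotopic.Quotient.mk_symm,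
    Path.Homotopic.Quotient.trans_assoc, Path.Homotopic.Quotient.trans_symm,
    Path.Homotopic.Quotient.trans_refl]
  rw [← Path.Homotopic.Quotient.trans_assoc, Path.Homotopic.Quotient.symm_trans,
    Path.Homotopic.Quotient.refl_trans]

/-- The induced map on path components. -/
noncomputable def conjMap (a : ∀ x, Path (f₁' x) (f₁ x)) (b : ∀ x, Path (f₂ x) (f₂' x))
    (ha : Continuous ↿a) (hb : Continuous ↿b) :
    ZerothHomotopy (HCS f₁ f₂) → ZerothHomotopy (HCS f₁' f₂') :=
  ZerothHomotopy.lift (fun p => ZerothHomotopy.mk (conj a b p))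
    fun _ _ γ => ZerothHomotopy.sound (γ.map (continuous_conj a b ha hb))

end HCSAux

theorem stmt12 (X Y : Type) [TopologicalSpace X] [TopologicalSpace Y]
    (f₁ f₁' f₂ f₂' : C(X, Y))
    (h₁ : f₁.Homotopic f₁') (h₂ : f₂.Homotopic f₂') :
    Nonempty (ZerothHomotopy (HCS f₁ f₂) ≃ ZerothHomotopy (HCS f₁' f₂')) := by
  obtain ⟨H⟩ := h₁
  obtain ⟨K⟩ := h₂
  have hH : Continuous ↿(fun x => H.evalAt x) := H.continuous.comp continuous_swap
  have hK : Continuous ↿(fun x => K.evalAt x) := K.continuous.comp continuous_swap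
  have hH' := Path.symm_continuous_family _ hH
  have hK' := Path.symm_continuous_family _ hK
  refine ⟨⟨HCSAux.conjMap (fun x => (H.evalAt x).symm) (fun x => K.evalAt x) hH' hK,
    HCSAux.conjMap (fun x => H.evalAt x) (fun x => (K.evalAt x).symm) hH hK', ?_, ?_⟩⟩
  · intro z
    obtain ⟨p, rfl⟩ := ZerothHomotopy.mk_surjective z
    have h := HCSAux.joined_conj_conj (fun x => (H.evalAt x).symm) (fun x => K.evalAt x) p
    simp only [Path.symm_symm] at h
    exact ZerothHomotopy.sound h.somePath
  · intro z
    obtain ⟨p, rfl⟩ := ZerothHomotopy.mk_surjective z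
    have h := HCSAux.joined_conj_conj (fun x => H.evalAt x) (fun x => (K.evalAt x).symm) p
    simp only [Path.symm_symm] at h
    exact ZerothHomotopy.sound h.somePath
end

section
/- Let m ≥ n ≥ 1 and let A be an n×m integer matrix of rank n over ℚ, inducing the continuous surjective homomorphism f_A : Tᵐ → Tⁿ. Then the kernel of f_A (equivalently, the coincidence set C(f_A, 0) of f_A with the zero map) has finitely many connected components, and the number of its connected components equals the index [ℤⁿ : A(ℤᵐ)] of the image of the ℤ-linear map ℤᵐ → ℤⁿ given by A. -/
/-- The `k`-torus `(ℝ/ℤ)ᵏ`. -/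
abbrev Torus (k : ℕ) : Type := Fin k → AddCircle (1 : ℝ)

/-- The continuous homomorphism `Tᵐ → Tⁿ` induced by an `n × m` integer matrix. -/
noncomputable def torusHom {m n : ℕ} (A : Matrix (Fin n) (Fin m) ℤ) :
    C(Torus m, Torus n) :=
  ⟨fun x j => ∑ i, A j i • x i, by
    refine continuous_pi fun j => ?_
    exact continuous_finset_sum _ fun i _ => (continuous_apply i).zsmul (A j i)⟩

/-- The covering projection `ℝᵏ → Tᵏ`. -/
noncomputable def torusProj (k : ℕ) (v : Fin k → ℝ) : Torus k := fun i => (v i : AddCircle (1 : ℝ))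

/-- The real linear map given by an integer matrix. -/
noncomputable def realMul {m n : ℕ} (A : Matrix (Fin n) (Fin m) ℤ) (v : Fin m → ℝ) : Fin n → ℝ :=
  fun j => ∑ i, (A j i : ℝ) * v i

theorem torusProj_continuous (k : ℕ) : Continuous (torusProj k) :=
  continuous_pi fun i => (AddCircle.continuous_mk' 1).comp (continuous_apply i)

theorem torusProj_surjective (k : ℕ) : Function.Surjective (torusProj k) := by
  intro x
  choose v hv using fun i => QuotientAddGroup.mk_surjective (x i)
  exact ⟨v, funext hv⟩

theorem torusProj_isOpenMap (k : ℕ) : IsOpenMap (torusProj k) :=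
  IsOpenMap.piMap (fun _ => QuotientAddGroup.isOpenMap_coe)
    (Filter.Eventually.of_forall fun _ => QuotientAddGroup.mk_surjective)

theorem coe_eq_zero_iff' (r : ℝ) : (r : AddCircle (1 : ℝ)) = 0 ↔ ∃ z : ℤ, r = z := by
  rw [AddCircle.coe_eq_zero_iff]
  simp [eq_comm]

theorem realMul_continuous {m n : ℕ} (A : Matrix (Fin n) (Fin m) ℤ) : Continuous (realMul A) := by
  unfold realMul
  fun_prop

theorem torusHom_proj {m n : ℕ} (A : Matrix (Fin n) (Fin m) ℤ) (v : Fin m → ℝ) :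
    torusHom A (torusProj m v) = torusProj n (realMul A v) := by
  funext j
  change ∑ i, A j i • ((v i : ℝ) : AddCircle (1 : ℝ)) = ((∑ i, (A j i : ℝ) * v i : ℝ) : AddCircle (1:ℝ))
  have : ∀ s : Finset (Fin m), ∑ i ∈ s, A j i • ((v i : ℝ) : AddCircle (1 : ℝ))
      = ((∑ i ∈ s, (A j i : ℝ) * v i : ℝ) : AddCircle (1:ℝ)) := by
    intro s
    induction s using Finset.induction_on with
    | empty => simp
    | insert a s ha ih =>
      rw [Finset.sum_insert ha, Finset.sum_insert ha, ih, AddCircle.coe_add, ← zsmul_eq_mul,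
        AddCircle.coe_zsmul]
  exact this _

theorem torusProj_eq_zero {k : ℕ} {v : Fin k → ℝ} (h : torusProj k v = 0) :
    ∃ b : Fin k → ℤ, v = fun i => (b i : ℝ) := by
  choose b hb using fun i => (coe_eq_zero_iff' (v i)).1 (congrFun h i)
  exact ⟨b, funext hb⟩

theorem torusProj_int {k : ℕ} (b : Fin k → ℤ) : torusProj k (fun i => (b i : ℝ)) = 0 :=
  funext fun i => (coe_eq_zero_iff' _).2 ⟨b i, rfl⟩

theorem torusProj_add {k : ℕ} (v w : Fin k → ℝ) :
    torusProj k (v + w) = torusProj k v + torusProj k w := rfl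

theorem torusProj_sub {k : ℕ} (v w : Fin k → ℝ) :
    torusProj k (v - w) = torusProj k v - torusProj k w := rfl

theorem realMul_add {m n : ℕ} (A : Matrix (Fin n) (Fin m) ℤ) (v w : Fin m → ℝ) :
    realMul A (v + w) = realMul A v + realMul A w := by
  funext j
  simp [realMul, mul_add, Finset.sum_add_distrib]

theorem realMul_smul {m n : ℕ} (A : Matrix (Fin n) (Fin m) ℤ) (c : ℝ) (v : Fin m → ℝ) :
    realMul A (c • v) = c • realMul A v := by
  funext j
  simp only [realMul, Pi.smul_apply, smul_eq_mul, Finset.mul_sum]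
  exact Finset.sum_congr rfl fun i _ => by ring

theorem realMul_int {m n : ℕ} (A : Matrix (Fin n) (Fin m) ℤ) (k : Fin m → ℤ) :
    realMul A (fun i => (k i : ℝ)) = fun j => ((A.mulVecLin k j : ℤ) : ℝ) := by
  funext j
  simp [realMul, Matrix.mulVec, dotProduct]

theorem exists_lift {m n : ℕ} (A : Matrix (Fin n) (Fin m) ℤ)
    (x : {x : Torus m // torusHom A x = 0}) :
    ∃ b : Fin n → ℤ, ∃ v, torusProj m v = x.1 ∧ realMul A v = fun j => (b j : ℝ) := by
  obtain ⟨v, hv⟩ := torusProj_surjective m x.1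
  have h : torusProj n (realMul A v) = 0 := by rw [← torusHom_proj, hv, x.2]
  obtain ⟨b, hb⟩ := torusProj_eq_zero h
  exact ⟨b, v, hv, hb⟩

/-- The map from the kernel to the cokernel of the integer matrix. -/
noncomputable def torusDelta {m n : ℕ} (A : Matrix (Fin n) (Fin m) ℤ)
    (x : {x : Torus m // torusHom A x = 0}) : (Fin n → ℤ) ⧸ LinearMap.range A.mulVecLin :=
  Submodule.Quotient.mk (exists_lift A x).choose

theorem torusDelta_eq {m n : ℕ} (A : Matrix (Fin n) (Fin m) ℤ)
    (x : {x : Torus m // torusHom A x = 0}) (v : Fin m → ℝ) (b : Fin n → ℤ)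
    (hv : torusProj m v = x.1) (hb : realMul A v = fun j => (b j : ℝ)) :
    torusDelta A x = Submodule.Quotient.mk b := by
  obtain ⟨w, hw, hc⟩ := (exists_lift A x).choose_spec
  unfold torusDelta
  generalize (exists_lift A x).choose = c at hc
  rw [Submodule.Quotient.eq]
  have h0 : torusProj m (w - v) = 0 := by rw [torusProj_sub, hw, hv, sub_self]
  obtain ⟨k, hk⟩ := torusProj_eq_zero h0
  refine ⟨k, ?_⟩
  have h1 : realMul A w = realMul A v + realMul A (w - v) := by
    rw [← realMul_add]; congr 1; abel
  rw [hc, hb, hk, realMul_int] at h1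
  funext j
  have := congrFun h1 j
  simp only [Pi.add_apply] at this
  have h2 : c j = b j + A.mulVecLin k j := by exact_mod_cast this
  simp only [Pi.sub_apply, h2]
  ring

/-- An explicit open set whose intersection with the kernel is a fibre. -/
theorem torusDelta_fibre_open {m n : ℕ} (A : Matrix (Fin n) (Fin m) ℤ)
    (q : (Fin n → ℤ) ⧸ LinearMap.range A.mulVecLin) : IsOpen (torusDelta A ⁻¹' {q}) := by
  rw [isOpen_iff_mem_nhds]
  intro x hx
  obtain ⟨b, v, hv, hb⟩ := exists_lift A x
  have hq : Submodule.Quotient.mk b = q := by rw [← torusDelta_eq A x v b hv hb]; exact hx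
  have hU : IsOpen (torusProj m '' (realMul A ⁻¹' Metric.ball (fun j => (b j : ℝ)) 1)) :=
    torusProj_isOpenMap m _ (Metric.isOpen_ball.preimage (realMul_continuous A))
  have hU' := hU.preimage (continuous_subtype_val (p := fun x : Torus m => torusHom A x = 0))
  refine Filter.mem_of_superset (hU'.mem_nhds ⟨v, ?_, hv⟩) ?_
  · simp [hb]
  · rintro y ⟨w, hw, hwy⟩
    have h : torusProj n (realMul A w) = 0 := by rw [← torusHom_proj, hwy, y.2]
    obtain ⟨c, hc⟩ := torusProj_eq_zero h
    have hcb : c = b := by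
      funext j
      rw [Set.mem_preimage, hc, Metric.mem_ball, dist_pi_lt_iff one_pos] at hw
      have := hw j
      rw [Real.dist_eq] at this
      have h3 : |c j - b j| < 1 := by exact_mod_cast this
      have := Int.abs_lt_one_iff.1 h3
      omega
    subst hcb
    exact (torusDelta_eq A y w c hwy hc).trans hq

theorem torusDelta_fibre_preconnected {m n : ℕ} (A : Matrix (Fin n) (Fin m) ℤ)
    (q : (Fin n → ℤ) ⧸ LinearMap.range A.mulVecLin) :
    IsPreconnected (torusDelta A ⁻¹' {q}) := by
  obtain ⟨b, rfl⟩ := Submodule.Quotient.mk_surjective _ q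
  let S : Set (Fin m → ℝ) := {v | realMul A v = fun j => (b j : ℝ)}
  have hS : Convex ℝ S := by
    intro v hv w hw s t _ _ hst
    change realMul A _ = _
    rw [realMul_add, realMul_smul, realMul_smul, hv, hw, ← add_smul, hst, one_smul]
  have hK : ∀ v ∈ S, torusHom A (torusProj m v) = 0 := by
    intro v hv
    rw [torusHom_proj, hv, torusProj_int]
  let g : S → {x : Torus m // torusHom A x = 0} := fun v => ⟨torusProj m v.1, hK v.1 v.2⟩
  have hg : Continuous g := ((torusProj_continuous m).comp continuous_subtype_val).subtype_mk _
  have : PreconnectedSpace S := isPreconnected_iff_preconnectedSpace.1 hS.isPreconnected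
  have heq : torusDelta A ⁻¹' {Submodule.Quotient.mk b} = Set.range g := by
    ext x
    constructor
    · intro hx
      obtain ⟨c, v, hv, hc⟩ := exists_lift A x
      have h1 : torusDelta A x = _ := torusDelta_eq A x v c hv hc
      have hx' : torusDelta A x = Submodule.Quotient.mk b := hx
      rw [h1, eq_comm, Submodule.Quotient.eq] at hx'
      obtain ⟨k, hk⟩ := hx'
      refine ⟨⟨v + fun i => (k i : ℝ), ?_⟩, ?_⟩
      · change realMul A _ = _
        rw [realMul_add, realMul_int, hk, hc]
        funext j
        simp
      · apply Subtype.ext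
        change torusProj m _ = _
        rw [torusProj_add, torusProj_int, add_zero, hv]
    · rintro ⟨v, rfl⟩
      exact torusDelta_eq A _ v.1 b rfl v.2
  rw [heq]
  exact isPreconnected_range hg

theorem torusDelta_surjective {m n : ℕ} (A : Matrix (Fin n) (Fin m) ℤ)
    (hrank : (A.map (Int.cast : ℤ → ℚ)).rank = n) : Function.Surjective (torusDelta A) := by
  intro q
  obtain ⟨b, rfl⟩ := Submodule.Quotient.mk_surjective _ q
  have htop : LinearMap.range (A.map (Int.cast : ℤ → ℚ)).mulVecLin = ⊤ := by
    apply Submodule.eq_top_of_finrank_eq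
    rw [Module.finrank_fin_fun]
    exact hrank
  obtain ⟨u, hu⟩ := LinearMap.range_eq_top.1 htop (fun j => (b j : ℚ))
  have hv : realMul A (fun i => (u i : ℝ)) = fun j => (b j : ℝ) := by
    funext j
    have := congrFun hu j
    simp only [Matrix.mulVecLin_apply, Matrix.mulVec, dotProduct, Matrix.map_apply] at this
    simp only [realMul]
    exact_mod_cast this
  have hK : torusHom A (torusProj m (fun i => (u i : ℝ))) = 0 := by
    rw [torusHom_proj, hv, torusProj_int]
  exact ⟨⟨_, hK⟩, torusDelta_eq A _ _ b rfl hv⟩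

theorem stmt18 (m n : ℕ) (hnm : n ≤ m) (hn : 1 ≤ n)
    (A : Matrix (Fin n) (Fin m) ℤ)
    (hrank : (A.map (Int.cast : ℤ → ℚ)).rank = n) :
    Finite (ConnectedComponents {x : Torus m // torusHom A x = 0}) ∧
    Nat.card (ConnectedComponents {x : Torus m // torusHom A x = 0}) =
      Nat.card ((Fin n → ℤ) ⧸ LinearMap.range A.mulVecLin) := by
  letI : TopologicalSpace ((Fin n → ℤ) ⧸ LinearMap.range A.mulVecLin) := ⊥
  haveI : DiscreteTopology ((Fin n → ℤ) ⧸ LinearMap.range A.mulVecLin) := ⟨rfl⟩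
  have hc : Continuous (torusDelta A) :=
    continuous_discrete_rng.2 (torusDelta_fibre_open A)
  have hs := torusDelta_surjective A hrank
  have hclosed : IsClosed {x : Torus m | torusHom A x = 0} :=
    isClosed_eq (torusHom A).continuous continuous_const
  haveI : Fact ((0 : ℝ) < 1) := ⟨one_pos⟩
  haveI : CompactSpace {x : Torus m // torusHom A x = 0} :=
    isCompact_iff_compactSpace.1 hclosed.isCompact
  haveI : CompactSpace ((Fin n → ℤ) ⧸ LinearMap.range A.mulVecLin) := hs.compactSpace hc
  haveI : Finite ((Fin n → ℤ) ⧸ LinearMap.range A.mulVecLin) := finite_of_compact_of_discrete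
  have hbij : Function.Bijective hc.connectedComponentsLift := by
    constructor
    · intro a b hab
      obtain ⟨x, rfl⟩ := ConnectedComponents.surjective_coe a
      obtain ⟨y, rfl⟩ := ConnectedComponents.surjective_coe b
      rw [hc.connectedComponentsLift_apply_coe, hc.connectedComponentsLift_apply_coe] at hab
      rw [ConnectedComponents.coe_eq_coe']
      exact (torusDelta_fibre_preconnected A (torusDelta A y)).subset_connectedComponent rfl hab
    · intro q
      obtain ⟨x, rfl⟩ := hs q
      exact ⟨x, hc.connectedComponentsLift_apply_coe x⟩
  exact ⟨Finite.of_injective _ hbij.1, Nat.card_eq_of_bijective _ hbij⟩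
end
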